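/- arXiv:2006.16456 — 6 statements merged into one kernel-verified Lean document; each statement's English description precedes it below -/
import Mathlib

section
/- For every η > 0, δ > 0 and compact K ⊆ S there exists T > 0 such that, for every x ∈ K and every path X ∈ C(ℝ≥0,S) with Π_x(X) > η, one has inf_{0≤t≤T} d(X(t), A) < δ. -/
open Filter Topology Metric Set MeasureTheory
open scoped NNReal

noncomputable section

/-- A deviability density on a topological space `E`. -/
def IsDeviabilityDensity {E : Type*} [TopologicalSpace E] (p : E → ℝ) : Prop :=
  (∀ x, p x ∈ Set.Icc (0:ℝ) 1) ∧ (⨆ x, p x) = 1 ∧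
    ∀ γ ∈ Set.Ioc (0:ℝ) 1, IsCompact {x | γ ≤ p x}

variable {S : Type*} [MetricSpace S]

/-- Time shift `θ_s` on continuous paths. -/
def pshift (s : ℝ≥0) (X : C(ℝ≥0, S)) : C(ℝ≥0, S) :=
  ⟨fun t => X (s + t), X.continuous.comp (continuous_const.add continuous_id)⟩

/-- `Π_{x,t}(y)`. -/
def transDen (Px : S → C(ℝ≥0, S) → ℝ) (x : S) (t : ℝ≥0) (y : S) : ℝ :=
  ⨆ X ∈ {X : C(ℝ≥0, S) | X t = y}, Px x X

/-- The standing assumptions (2.2)--(2.5) of the paper, together with the basic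
assumptions on the family of path deviability densities `Px` and the set `A`. -/
structure DevSetup (S : Type*) [MetricSpace S] (Px : S → C(ℝ≥0, S) → ℝ) (A : Set S) :
    Prop where
  dev : ∀ x, IsDeviabilityDensity (Px x)
  start : ∀ x (X : C(ℝ≥0, S)), X 0 ≠ x → Px x X = 0
  /-- (2.2) upper semicontinuity -/
  usc : UpperSemicontinuous (fun q : S × C(ℝ≥0, S) => Px q.1 q.2)
  /-- (2.2) uniform upper compactness -/
  cpt : ∀ K : Set S, IsCompact K → ∀ γ ∈ Set.Ioc (0:ℝ) 1,
    IsCompact (⋃ x ∈ K, {X : C(ℝ≥0, S) | γ ≤ Px x X})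
  /-- (2.3) the maxitive Markov property -/
  markov : ∀ x (X : C(ℝ≥0, S)) (s : ℝ≥0),
    Px x X = (⨆ X' ∈ {X' : C(ℝ≥0, S) | ∀ u ≤ s, X' u = X u}, Px x X') *
      Px (X s) (pshift s X)
  /-- (2.4) `A` is locally finite -/
  locFin : ∀ K : Set S, IsCompact K → (K ∩ A).Finite
  /-- (2.4)(i) -/
  attract : ∀ x (X : C(ℝ≥0, S)), Px x X = 1 → (⨅ t : ℝ≥0, infDist (X t) A) = 0
  /-- (2.4)(ii) -/
  equil : ∀ a ∈ A, Px a (ContinuousMap.const ℝ≥0 a) = 1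
  /-- (2.4)(iii) -/
  connect : ∀ a ∈ A, ∀ a' ∈ A, ∃ t : ℝ≥0, 0 < t ∧ 0 < transDen Px a t a'
  /-- (2.4)(iv) -/
  nearA : ∀ ε : ℝ, 0 < ε → ∃ δ : ℝ, 0 < δ ∧ ∀ x : S, infDist x A < δ →
    ∃ s₀ s₁ : ℝ≥0, 0 < s₀ ∧ 0 < s₁ ∧ ∃ a ∈ A,
      1 - ε < transDen Px x s₀ a ∧ 1 - ε < transDen Px a s₁ x
  /-- (2.4)(v) -/
  localMove : ∀ x : S, ∀ ε : ℝ, 0 < ε → ∃ δ : ℝ, 0 < δ ∧ ∃ t₀ t₁ : ℝ≥0,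
    ∀ x' : S, dist x x' < δ →
      1 - ε < transDen Px x t₀ x' ∧ 1 - ε < transDen Px x' t₁ x
  /-- (2.5) uniform tightness -/
  tight : ∀ K₁ : Set S, IsCompact K₁ → ∀ ε : ℝ, 0 < ε → ∃ K₂ : Set S, IsCompact K₂ ∧
    Filter.limsup (fun t : ℝ≥0 => ⨆ x ∈ K₁, ⨆ y ∈ K₂ᶜ, transDen Px x t y) atTop < ε

theorem px_nonneg {Px : S → C(ℝ≥0, S) → ℝ} {A : Set S} (hyp : DevSetup S Px A)
    (x : S) (X : C(ℝ≥0, S)) : 0 ≤ Px x X := ((hyp.dev x).1 X).1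

theorem px_le_one {Px : S → C(ℝ≥0, S) → ℝ} {A : Set S} (hyp : DevSetup S Px A)
    (x : S) (X : C(ℝ≥0, S)) : Px x X ≤ 1 := ((hyp.dev x).1 X).2

/-- Nested suprema of quantities in `[0,1]`. -/
theorem bsup_le {ι : Type*} {s : Set ι} {f : ι → ℝ} {c : ℝ} (hc : 0 ≤ c)
    (h : ∀ i ∈ s, f i ≤ c) : (⨆ i ∈ s, f i) ≤ c :=
  Real.iSup_le (fun i => Real.iSup_le (fun hi => h i hi) hc) hc

theorem bsup_nonneg {ι : Type*} {s : Set ι} {f : ι → ℝ}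
    (h : ∀ i, 0 ≤ f i) : 0 ≤ (⨆ i ∈ s, f i) :=
  Real.iSup_nonneg (fun i => Real.iSup_nonneg (fun _ => h i))

theorem le_bsup {ι : Type*} {s : Set ι} {f : ι → ℝ} (h1 : ∀ i, f i ≤ 1)
    {i : ι} (hi : i ∈ s) : f i ≤ (⨆ i ∈ s, f i) := by
  have hb : BddAbove (range fun i => ⨆ (_ : i ∈ s), f i) := by
    refine ⟨1, ?_⟩
    rintro _ ⟨j, rfl⟩
    exact Real.iSup_le (fun _ => h1 j) zero_le_one
  have := le_ciSup hb i
  simpa [hi] using this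

/-- Uniform loss on blocks. -/
theorem block_loss {Px : S → C(ℝ≥0, S) → ℝ} {A : Set S} (hyp : DevSetup S Px A)
    {δ : ℝ} (hδ : 0 < δ) {K : Set S} (hK : IsCompact K) :
    ∃ (n : ℕ) (ρ : ℝ), 0 ≤ ρ ∧ ρ < 1 ∧ ∀ x ∈ K, ∀ X : C(ℝ≥0, S),
      (∀ t ≤ (n : ℝ≥0), δ ≤ infDist (X t) A) → Px x X ≤ ρ := by
  by_contra hcon
  push Not at hcon
  let r : ℕ → ℝ := fun n => 1 - 1 / ((n : ℝ) + 2)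
  have hr0 : ∀ n, 1 / 2 ≤ r n := by
    intro n
    have : 1 / ((n : ℝ) + 2) ≤ 1 / 2 :=
      one_div_le_one_div_of_le (by norm_num) (by linarith [n.cast_nonneg (α := ℝ)])
    simp only [r]; linarith
  have hr1 : ∀ n, r n < 1 := by
    intro n
    have : 0 < 1 / ((n : ℝ) + 2) := by positivity
    simp only [r]; linarith
  have hrm : ∀ n, r n ≤ r (n + 1) := by
    intro n
    have : 1 / (((n + 1 : ℕ) : ℝ) + 2) ≤ 1 / ((n : ℝ) + 2) :=
      one_div_le_one_div_of_le (by positivity) (by push_cast; linarith)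
    simp only [r]; linarith
  let F : ℕ → Set (S × C(ℝ≥0, S)) := fun n =>
    {q | q.1 ∈ K ∧ r n ≤ Px q.1 q.2 ∧ ∀ t ≤ (n : ℝ≥0), δ ≤ infDist (q.2 t) A}
  have hcl : ∀ n, IsClosed (F n) := by
    intro n
    have h1 : IsClosed {q : S × C(ℝ≥0, S) | q.1 ∈ K} := hK.isClosed.preimage continuous_fst
    have h2 : IsClosed {q : S × C(ℝ≥0, S) | r n ≤ Px q.1 q.2} := hyp.usc.isClosed_preimage (r n)
    have h3 : IsClosed {q : S × C(ℝ≥0, S) | ∀ t ≤ (n : ℝ≥0), δ ≤ infDist (q.2 t) A} := by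
      simp only [Set.ofPred_forall]
      refine isClosed_iInter fun t => isClosed_iInter fun _ => ?_
      refine isClosed_le continuous_const ?_
      exact (continuous_infDist_pt A).comp ((continuous_eval_const t).comp
        continuous_snd)
    exact h1.inter (h2.inter h3)
  have hne : ∀ n, (F n).Nonempty := by
    intro n
    obtain ⟨x, hx, X, hX, h⟩ := hcon n (r n) (by linarith [hr0 n]) (hr1 n)
    exact ⟨(x, X), hx, h.le, hX⟩
  have hmono : ∀ n, F (n + 1) ⊆ F n := by
    rintro n q ⟨h1, h2, h3⟩
    refine ⟨h1, (hrm n).trans h2, fun t ht => h3 t (ht.trans ?_)⟩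
    exact_mod_cast Nat.le_succ n
  have hcp : IsCompact (F 0) := by
    refine (hK.prod (hyp.cpt K hK (1 / 2) (by norm_num))).of_isClosed_subset (hcl 0) ?_
    rintro ⟨x, X⟩ ⟨h1, h2, h3⟩
    refine ⟨h1, ?_⟩
    simp only [mem_iUnion]
    exact ⟨x, h1, (hr0 0).trans h2⟩
  obtain ⟨⟨x, X⟩, hq⟩ := IsCompact.nonempty_iInter_of_sequence_nonempty_isCompact_isClosed
    F hmono hne hcp hcl
  rw [mem_iInter] at hq
  have hlim : Tendsto r atTop (𝓝 1) := by
    have h : Tendsto (fun n : ℕ => (n : ℝ) + 2) atTop atTop :=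
      tendsto_atTop_add_const_right _ _ tendsto_natCast_atTop_atTop
    simpa [r] using (tendsto_const_nhds (x := (1 : ℝ))).sub h.inv_tendsto_atTop
  have h1 : Px x X = 1 := le_antisymm (px_le_one hyp x X)
    (le_of_tendsto' hlim fun n => (hq n).2.1)
  have h2 := hyp.attract x X h1
  have h3 : δ ≤ ⨅ t : ℝ≥0, infDist (X t) A := by
    refine le_ciInf fun t => ?_
    obtain ⟨n, hn⟩ := exists_nat_ge t
    exact (hq n).2.2 t hn
  linarith

/-- Iterating the loss with the Markov property. -/
theorem iterate_loss {Px : S → C(ℝ≥0, S) → ℝ} {A : Set S} (hyp : DevSetup S Px A)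
    {δ : ℝ} {K : Set S} {s : ℝ≥0} {ρ : ℝ} (h0 : 0 ≤ ρ)
    (hρ : ∀ x ∈ K, ∀ X : C(ℝ≥0, S),
      (∀ t ≤ s, δ ≤ infDist (X t) A) → Px x X ≤ ρ) (m : ℕ) :
    ∀ x ∈ K, ∀ X : C(ℝ≥0, S), (∀ t, X t ∈ K) →
      (∀ t ≤ m * s, δ ≤ infDist (X t) A) → Px x X ≤ ρ ^ m := by
  induction m with
  | zero => intro x _ X _ _; simpa using px_le_one hyp x X
  | succ m ih =>
    intro x hx X hXK hX
    have hms : ((m + 1 : ℕ) : ℝ≥0) * s = s + m * s := by push_cast; ring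
    rw [hms] at hX
    rw [hyp.markov x X s, pow_succ']
    refine mul_le_mul ?_ ?_ (px_nonneg hyp _ _) h0
    · refine bsup_le h0 fun X' hX' => hρ x hx X' fun t ht => ?_
      rw [hX' t ht]
      exact hX t (ht.trans le_self_add)
    · refine ih _ (hXK s) _ (fun t => hXK (s + t)) fun t ht => ?_
      exact hX (s + t) (by gcongr)

theorem stmt1 (Px : S → C(ℝ≥0, S) → ℝ) (A : Set S) (hyp : DevSetup S Px A) :
    ∀ η : ℝ, 0 < η → ∀ δ : ℝ, 0 < δ → ∀ K : Set S, IsCompact K →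
      ∃ T : ℝ≥0, 0 < T ∧ ∀ x ∈ K, ∀ X : C(ℝ≥0, S), η < Px x X →
        ∃ t ≤ T, infDist (X t) A < δ := by
  intro η hη δ hδ K hK
  obtain ⟨K₂, hK₂, hlim⟩ := hyp.tight K hK η hη
  have htd1 : ∀ x t y, transDen Px x t y ≤ 1 := fun x t y =>
    bsup_le zero_le_one fun X _ => px_le_one hyp x X
  have hev := Filter.eventually_lt_of_limsup_lt hlim
    (Filter.isBoundedUnder_of ⟨1, fun t => bsup_le zero_le_one fun x _ =>
      bsup_le zero_le_one fun y _ => htd1 x t y⟩)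
  obtain ⟨t₁, ht₁⟩ := Filter.eventually_atTop.1 hev
  have hin : ∀ x ∈ K, ∀ X : C(ℝ≥0, S), η < Px x X → ∀ t ≥ t₁, X t ∈ K₂ := by
    intro x hx X hX t ht
    by_contra hn
    have a1 : Px x X ≤ transDen Px x t (X t) :=
      le_bsup (s := {Y : C(ℝ≥0, S) | Y t = X t}) (px_le_one hyp x) rfl
    have a2 : transDen Px x t (X t) ≤ ⨆ y ∈ K₂ᶜ, transDen Px x t y :=
      le_bsup (fun y => htd1 x t y) hn
    have a3 := le_bsup (s := K) (f := fun x => ⨆ y ∈ K₂ᶜ, transDen Px x t y)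
      (fun x => bsup_le zero_le_one fun y _ => htd1 x t y) hx
    have a4 := ht₁ t ht
    linarith
  obtain ⟨n, ρ, h0, h1, hρ⟩ := block_loss hyp hδ hK₂
  obtain ⟨m, hm⟩ := exists_pow_lt_of_lt_one hη h1
  refine ⟨t₁ + m * n + 1, by positivity, fun x hx X hX => ?_⟩
  by_contra hcon
  push Not at hcon
  have hXK := hin x hx X hX
  have b1 := iterate_loss hyp h0 hρ m (X t₁) (hXK t₁ le_rfl) (pshift t₁ X)
    (fun t => hXK (t₁ + t) le_self_add)
    (fun t ht => hcon (t₁ + t) ((add_le_add le_rfl ht).trans le_self_add))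
  have b2 : Px x X ≤ Px (X t₁) (pshift t₁ X) := by
    rw [hyp.markov x X t₁]
    exact mul_le_of_le_one_left (px_nonneg hyp _ _)
      (bsup_le zero_le_one fun X' _ => px_le_one hyp x X')
  linarith
end
end

section
/- Let x^t and y^t, t ≥ 0, be families of points of S with x^t → x and y^t → y as t → ∞. Then the limit lim_{t→∞} Π_{x^t,t}(y^t) exists; in particular, Π(x,y) := lim_{t→∞} Π_{x,t}(y) exists, and lim_{t→∞} Π_{x^t,t}(y^t) = Π(x,y) depends only on (x,y). -/
open Filter Topology Metric Set MeasureTheory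
open scoped NNReal

noncomputable section

variable {S : Type*} [MetricSpace S]

namespace DevAux

lemma le_biSup_aux {E : Type*} (p : E → ℝ) (hp : ∀ x, p x ∈ Set.Icc (0:ℝ) 1) (s : Set E)
    {x : E} (hx : x ∈ s) : p x ≤ ⨆ y ∈ s, p y := by
  have h1 : p x ≤ ⨆ (_ : x ∈ s), p x :=
    le_ciSup (f := fun _ : x ∈ s => p x) ⟨1, by rintro _ ⟨_, rfl⟩; exact (hp x).2⟩ hx
  refine h1.trans (le_ciSup (f := fun y => ⨆ (_ : y ∈ s), p y) ⟨1, ?_⟩ x)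
  rintro _ ⟨y, rfl⟩
  exact Real.iSup_le (fun _ => (hp y).2) zero_le_one

lemma biSup_le_aux {E : Type*} (p : E → ℝ) (s : Set E) {c : ℝ} (hc : 0 ≤ c)
    (h : ∀ x ∈ s, p x ≤ c) : (⨆ y ∈ s, p y) ≤ c :=
  Real.iSup_le (fun y => Real.iSup_le (fun hy => h y hy) hc) hc

lemma exists_of_lt_biSup {E : Type*} (p : E → ℝ) (s : Set E) {c : ℝ} (hc : 0 ≤ c)
    (h : c < ⨆ y ∈ s, p y) : ∃ x ∈ s, c < p x := by
  by_contra! hcon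
  exact absurd (biSup_le_aux p s hc hcon) (not_le.2 h)

lemma biSup_mem {E : Type*} (p : E → ℝ) (hp : ∀ x, p x ∈ Set.Icc (0:ℝ) 1) (s : Set E) :
    (⨆ y ∈ s, p y) ∈ Set.Icc (0:ℝ) 1 :=
  ⟨Real.iSup_nonneg fun y => Real.iSup_nonneg fun _ => (hp y).1,
    biSup_le_aux p s zero_le_one fun x _ => (hp x).2⟩

lemma biSup_mul_le {E : Type*} (p : E → ℝ) (s : Set E) {c r : ℝ} (hc : 0 ≤ c) (hr : 0 ≤ r)
    (h : ∀ x ∈ s, p x * r ≤ c) : (⨆ y ∈ s, p y) * r ≤ c := by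
  rcases hr.eq_or_lt with rfl | hr
  · simpa using hc
  · rw [← le_div_iff₀ hr]
    exact biSup_le_aux p s (by positivity) fun x hx => (le_div_iff₀ hr).2 (h x hx)

section
variable {T : Type*} [MetricSpace T] {Px : T → C(ℝ≥0, T) → ℝ} {A : Set T}

lemma mem (hyp : DevSetup T Px A) (x : T) (X : C(ℝ≥0, T)) : Px x X ∈ Set.Icc (0:ℝ) 1 :=
  (hyp.dev x).1 X

lemma tmem (hyp : DevSetup T Px A) (x : T) (t : ℝ≥0) (y : T) :
    transDen Px x t y ∈ Set.Icc (0:ℝ) 1 := biSup_mem _ (mem hyp x) _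

lemma le_trans' (hyp : DevSetup T Px A) (x : T) (X : C(ℝ≥0, T)) (t : ℝ≥0) :
    Px x X ≤ transDen Px x t (X t) :=
  le_biSup_aux (Px x) (mem hyp x) {Y : C(ℝ≥0, T) | Y t = X t} rfl

def concat (X Y : C(ℝ≥0, T)) (s : ℝ≥0) (h : X s = Y 0) : C(ℝ≥0, T) :=
  ⟨fun t => if t ≤ s then X t else Y (t - s), by
    refine Continuous.if_le X.continuous (Y.continuous.comp (continuous_id.sub continuous_const))
      continuous_id continuous_const ?_
    rintro t rfl
    simpa using h⟩

lemma ck_path (hyp : DevSetup T Px A) (x : T) (X Y : C(ℝ≥0, T)) (s t : ℝ≥0) :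
    Px x X * Px (X s) Y ≤ transDen Px x (s + t) (Y t) := by
  by_cases h : Y 0 = X s
  · have hm := hyp.markov x (concat X Y s h.symm) s
    have e1 : concat X Y s h.symm s = X s := by simp [concat]
    have e2 : pshift s (concat X Y s h.symm) = Y := by
      ext u
      by_cases hu : u = 0
      · subst hu; simp [pshift, concat, h]
      · have : ¬ (s + u ≤ s) := by
          simpa using hu
        simp [pshift, concat, hu]
    have e3 : concat X Y s h.symm (s + t) = Y t := by
      exact DFunLike.congr_fun e2 t
    rw [e1, e2] at hm
    have h3 := le_trans' hyp x (concat X Y s h.symm) (s + t)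
    rw [e3, hm] at h3
    refine le_trans ?_ h3
    refine mul_le_mul_of_nonneg_right ?_ (mem hyp _ _).1
    refine le_biSup_aux (Px x) (mem hyp x) _ ?_
    intro u hu
    simp [concat, hu]
  · rw [hyp.start _ _ h, mul_zero]
    exact (tmem hyp _ _ _).1

lemma ck (hyp : DevSetup T Px A) (x y z : T) (s t : ℝ≥0) :
    transDen Px x s y * transDen Px y t z ≤ transDen Px x (s + t) z := by
  refine biSup_mul_le _ _ (tmem hyp _ _ _).1 (tmem hyp _ _ _).1 ?_
  intro X hX
  rw [mul_comm]
  refine biSup_mul_le _ _ (tmem hyp _ _ _).1 (mem hyp _ _).1 ?_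
  intro Y hY
  have := ck_path hyp x X Y s t
  simp only [mem_ofPred_eq] at hX hY
  rw [hX, hY] at this
  linarith

lemma path_le (hyp : DevSetup T Px A) (x : T) (X : C(ℝ≥0, T)) (s t : ℝ≥0) :
    Px x X ≤ transDen Px x s (X s) * transDen Px (X s) t (X (s + t)) := by
  rw [hyp.markov x X s]
  refine mul_le_mul ?_ (le_trans' hyp _ (pshift s X) t) (mem hyp _ _).1 (tmem hyp _ _ _).1
  refine biSup_le_aux _ _ (tmem hyp _ _ _).1 ?_
  intro X' hX'
  have := le_trans' hyp x X' s
  rwa [hX' s le_rfl] at this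

lemma shift_ge (hyp : DevSetup T Px A) (x : T) (X : C(ℝ≥0, T)) (s : ℝ≥0) :
    Px x X ≤ Px (X s) (pshift s X) := by
  conv_lhs => rw [hyp.markov x X s]
  exact mul_le_of_le_one_left (mem hyp _ _).1 (biSup_mem _ (mem hyp x) _).2

lemma equil' (hyp : DevSetup T Px A) {a : T} (ha : a ∈ A) (t : ℝ≥0) :
    transDen Px a t a = 1 := by
  refine le_antisymm (tmem hyp _ _ _).2 ?_
  have := le_trans' hyp a (ContinuousMap.const ℝ≥0 a) t
  rwa [hyp.equil a ha] at this

lemma visit (hyp : DevSetup T Px A) {K : Set T} (hK : IsCompact K) {δ : ℝ} (hδ : 0 < δ) :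
    ∃ (N : ℕ) (η : ℝ), 0 ≤ η ∧ η < 1 ∧ ∀ z ∈ K, ∀ Y : C(ℝ≥0, T), η < Px z Y →
      ∃ s : ℝ≥0, s ≤ N ∧ infDist (Y s) A < δ := by
  by_contra! hcon
  have hη : ∀ n : ℕ, (0:ℝ) ≤ 1 - 1 / ((n:ℝ) + 2) ∧ 1 - 1 / ((n:ℝ) + 2) < 1 := by
    intro n
    have h1 : (0:ℝ) < 1 / ((n:ℝ) + 2) := by positivity
    have h2 : 1 / ((n:ℝ) + 2) ≤ 1 := by
      rw [div_le_one (by positivity)]; linarith [n.cast_nonneg (α := ℝ)]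
    constructor <;> linarith
  choose z hz Y hY hYs using fun n : ℕ => hcon n _ (hη n).1 (hη n).2
  set C := ⋃ x ∈ K, {X : C(ℝ≥0, T) | (1/2 : ℝ) ≤ Px x X}
  have hC : IsCompact C := hyp.cpt K hK (1/2) ⟨by norm_num, by norm_num⟩
  have hYC : ∀ n, Y n ∈ C := by
    intro n
    simp only [C, mem_iUnion, mem_ofPred_eq]
    refine ⟨z n, hz n, ?_⟩
    have h2 : 1 / ((n:ℝ) + 2) ≤ 1/2 := by
      apply one_div_le_one_div_of_le <;> linarith [n.cast_nonneg (α := ℝ)]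
    linarith [hY n]
  obtain ⟨⟨w, W⟩, -, hcl⟩ := (hK.prod hC).exists_mapClusterPt_of_frequently
    (l := (atTop : Filter ℕ)) (f := fun n => (z n, Y n))
    (Eventually.frequently (Eventually.of_forall fun n => ⟨hz n, hYC n⟩))
  have hlim : Tendsto (fun n : ℕ => (1:ℝ) - 1 / ((n:ℝ) + 2)) atTop (𝓝 1) := by
    have h0 : Tendsto (fun n : ℕ => (1:ℝ) / ((n:ℝ) + 2)) atTop (𝓝 0) := by
      refine Tendsto.div_atTop tendsto_const_nhds ?_
      exact tendsto_atTop_add_const_right _ _ tendsto_natCast_atTop_atTop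
    simpa using h0.const_sub 1
  have h1 : Px w W = 1 := by
    refine le_antisymm (mem hyp _ _).2 ?_
    by_contra! hlt
    obtain ⟨c, hc1, hc2⟩ := exists_between hlt
    have hu := hyp.usc (w, W) c hc1
    have hf := hcl.frequently hu
    obtain ⟨n, hn1, hn2⟩ := (hf.and_eventually (hlim.eventually (lt_mem_nhds hc2))).exists
    have := hY n
    simp only at hn1
    linarith
  have h2 := hyp.attract w W h1
  have h3 : δ ≤ ⨅ t : ℝ≥0, infDist (W t) A := by
    refine le_ciInf fun t => ?_
    by_contra! hlt
    have hcont : Continuous fun q : T × C(ℝ≥0, T) => infDist (q.2 t) A :=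
      (continuous_infDist_pt A).comp ((continuous_eval_const (F := C(ℝ≥0, T)) t).comp continuous_snd)
    have hf := hcl.frequently (hcont.continuousAt.eventually (gt_mem_nhds (a := δ) hlt))
    obtain ⟨k, hk⟩ := exists_nat_ge t
    obtain ⟨n, hn1, hn2⟩ := (hf.and_eventually (eventually_ge_atTop k)).exists
    have hkn : (t:ℝ≥0) ≤ (n:ℝ≥0) := hk.trans (by exact_mod_cast hn2)
    exact absurd (hYs n t hkn) (not_le.2 hn1)
  linarith

lemma tight' (hyp : DevSetup T Px A) (x : T) {γ : ℝ} (hγ : 0 < γ) :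
    ∃ K : Set T, IsCompact K ∧ ∃ t₀ : ℝ≥0, ∀ t ≥ t₀, ∀ y, γ ≤ transDen Px x t y → y ∈ K := by
  obtain ⟨K, hK, hl⟩ := hyp.tight {x} isCompact_singleton γ hγ
  refine ⟨K, hK, ?_⟩
  have hin : ∀ (t : ℝ≥0) (z : T), (⨆ y ∈ Kᶜ, transDen Px z t y) ∈ Set.Icc (0:ℝ) 1 :=
    fun t z => biSup_mem _ (fun y => tmem hyp z t y) _
  have hev := eventually_lt_of_limsup_lt hl
    ⟨1, by
      simp only [eventually_map]
      exact Eventually.of_forall fun t => (biSup_mem _ (hin t) {x}).2⟩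
  obtain ⟨t₀, ht₀⟩ := eventually_atTop.1 hev
  refine ⟨t₀, fun t ht y hy => ?_⟩
  by_contra hyK
  have h1 := le_biSup_aux _ (fun y => tmem hyp x t y) Kᶜ hyK
  have h2 := le_biSup_aux _ (hin t) {x} (mem_singleton x)
  have h3 := ht₀ t ht
  exact absurd (hy.trans (h1.trans h2)) (not_le.2 h3)

lemma small_incr (f : ℕ → ℝ) (m : ℕ) (hm : 0 < m) (h0 : 0 ≤ f 0) (h1 : f m ≤ 1) :
    ∃ k < m, f (k + 1) - f k ≤ 1 / (m:ℝ) := by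
  by_contra! hcon
  have h := Finset.sum_lt_sum_of_nonempty (s := Finset.range m) ⟨0, by simpa using hm⟩
    (fun k hk => hcon k (Finset.mem_range.1 hk))
  rw [Finset.sum_range_sub] at h
  have hm' : (m:ℝ) ≠ 0 := by positivity
  simp [hm'] at h
  linarith

lemma core (hyp : DevSetup T Px A) (x y : T) {γ r : ℝ} (hγ : 0 < γ) (hr0 : 0 < r) (hr : r < 1)
    (hf : ∃ᶠ t in (atTop : Filter ℝ≥0), γ < transDen Px x t y) :
    ∃ a ∈ A, ∃ s t : ℝ≥0, r * r * γ ≤ transDen Px x s a * transDen Px a t y := by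
  obtain ⟨δ, hδ, hnear⟩ := hyp.nearA (1 - r) (by linarith)
  obtain ⟨K, hK, t₀, ht₀⟩ := tight' hyp x hγ
  obtain ⟨N, η, hη0, hη1, hvis⟩ := visit hyp hK hδ
  obtain ⟨m', hm'⟩ := exists_nat_gt (1 / ((1 - η) * γ))
  have hpos : 0 < (1 - η) * γ := mul_pos (by linarith) hγ
  have hm'pos : (0:ℝ) < m' := lt_trans (by positivity) hm'
  have hm0 : 0 < m' := by exact_mod_cast hm'pos
  have hm1 : 1 / (m':ℝ) < (1 - η) * γ := by
    rw [div_lt_iff₀ hpos] at hm'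
    rw [div_lt_iff₀ hm'pos]; linarith
  obtain ⟨t, htγ, ht⟩ := (hf.and_eventually (eventually_ge_atTop (t₀ + m' * N))).exists
  obtain ⟨X, hX, hXγ⟩ := exists_of_lt_biSup _ _ hγ.le htγ
  simp only [mem_ofPred_eq] at hX
  let u : ℕ → ℝ≥0 := fun k => t₀ + k * N
  let f : ℕ → ℝ := fun k => Px (X (u k)) (pshift (u k) X)
  obtain ⟨k, hkm, hk⟩ := small_incr f m' hm0 (mem hyp _ _).1 (mem hyp _ _).2
  have hz : X (u k) ∈ K := ht₀ (u k) (by simp [u]) _ (hXγ.le.trans (le_trans' hyp x X (u k)))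
  have hmk := hyp.markov (X (u k)) (pshift (u k) X) N
  have hu1 : u k + N = u (k + 1) := by simp only [u]; push_cast; ring
  have e1 : pshift (u k) X N = X (u (k + 1)) := by simp [pshift, hu1]
  have e2 : pshift N (pshift (u k) X) = pshift (u (k + 1)) X := by
    ext v
    simp only [pshift, ContinuousMap.coe_mk, ← hu1, add_assoc]
  rw [e1, e2] at hmk
  set q := ⨆ X' ∈ {X' : C(ℝ≥0, T) | ∀ v ≤ (N:ℝ≥0), X' v = pshift (u k) X v}, Px (X (u k)) X' with hq
  have hmk' : f k = q * f (k + 1) := hmk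
  have hfk : γ ≤ f (k + 1) := hXγ.le.trans (shift_ge hyp x X _)
  have hqη : η < q := by
    by_contra! hle
    nlinarith
  obtain ⟨X', hX', hX'η⟩ := exists_of_lt_biSup _ _ hη0 hqη
  obtain ⟨s, hsN, hs⟩ := hvis _ hz X' hX'η
  rw [hX' s hsN] at hs
  have hv : u k + s ≤ t := by
    refine le_trans ?_ ht
    calc u k + s ≤ u k + N := by gcongr
      _ = t₀ + ((k + 1 : ℕ) : ℝ≥0) * N := hu1
      _ ≤ t₀ + m' * N := by gcongr; exact hkm
  obtain ⟨w, hw⟩ := exists_add_of_le hv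
  have hs' : infDist (X (u k + s)) A < δ := hs
  obtain ⟨s₀, s₁, -, -, a, ha, h1, h2⟩ := hnear _ hs'
  have hp := path_le hyp x X (u k + s) w
  rw [← hw, hX] at hp
  have c1 := ck hyp x (X (u k + s)) a (u k + s) s₀
  have c2 := ck hyp a (X (u k + s)) y s₁ w
  refine ⟨a, ha, _, _, le_trans ?_ (mul_le_mul c1 c2 (mul_nonneg (tmem hyp _ _ _).1 (tmem hyp _ _ _).1) (tmem hyp _ _ _).1)⟩
  have h1' : r ≤ transDen Px (X (u k + s)) s₀ a := by linarith
  have h2' : r ≤ transDen Px a s₁ (X (u k + s)) := by linarith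
  have h12 := mul_le_mul h1' h2' hr0.le (tmem hyp _ _ _).1
  have h34 := hXγ.le.trans hp
  have := mul_le_mul h12 h34 hγ.le (mul_nonneg (tmem hyp _ _ _).1 (tmem hyp _ _ _).1)
  linarith

lemma exists_r {c c' : ℝ} (h : c < c') : ∃ r : ℝ, 0 < r ∧ r < 1 ∧ c < r ^ 4 * c' := by
  have hc : ContinuousAt (fun r : ℝ => r ^ 4 * c') 1 := by fun_prop
  have h1 : ∀ᶠ r in 𝓝 (1:ℝ), c < r ^ 4 * c' := hc.eventually (lt_mem_nhds (by simpa using h))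
  have h2 : ∀ᶠ r in 𝓝 (1:ℝ), 0 < r := lt_mem_nhds one_pos
  obtain ⟨r, hr, hlt⟩ :=
    (((h1.and h2).filter_mono nhdsWithin_le_nhds : ∀ᶠ r in 𝓝[<] (1:ℝ), _).and
      self_mem_nhdsWithin).exists
  exact ⟨r, hr.2, hlt, hr.1⟩

lemma lower (hyp : DevSetup T Px A) (x y : T) (xt yt : ℝ≥0 → T)
    (hx : Tendsto xt atTop (𝓝 x)) (hy : Tendsto yt atTop (𝓝 y)) {c c' : ℝ} (hc' : 0 < c')
    (hcc : c < c') (hf : ∃ᶠ t in (atTop : Filter ℝ≥0), c' < transDen Px x t y) :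
    ∀ᶠ t in (atTop : Filter ℝ≥0), c < transDen Px (xt t) t (yt t) := by
  obtain ⟨r, hr0, hr1, hr⟩ := exists_r hcc
  obtain ⟨a, ha, s, t, hst⟩ := core hyp x y hc' hr0 hr1 hf
  obtain ⟨δ, hδ, p₀, p₁, hp⟩ := hyp.localMove x (1 - r) (by linarith)
  obtain ⟨δ', hδ', q₀, q₁, hq⟩ := hyp.localMove y (1 - r) (by linarith)
  filter_upwards [hx (ball_mem_nhds x hδ), hy (ball_mem_nhds y hδ'),
    eventually_ge_atTop (p₁ + s + t + q₀)] with v hv1 hv2 hv3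
  obtain ⟨w, rfl⟩ := exists_add_of_le hv3
  set v := p₁ + s + t + q₀ + w with hv
  have g1 : r ≤ transDen Px (xt v) p₁ x := by
    have := (hp (xt v) (by rw [dist_comm]; exact hv1)).2
    linarith
  have g2 : r ≤ transDen Px y q₀ (yt v) := by
    have := (hq (yt v) (by rw [dist_comm]; exact hv2)).1
    linarith
  have k1 := ck hyp (xt v) x a p₁ s
  have k2 := ck hyp (xt v) a a (p₁ + s) w
  rw [equil' hyp ha, mul_one] at k2
  have k3 := ck hyp a y (yt v) t q₀
  have k4 := ck hyp (xt v) a (yt v) (p₁ + s + w) (t + q₀)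
  have ev : p₁ + s + w + (t + q₀) = v := by rw [hv]; ring
  rw [ev] at k4
  have m1 := mul_le_mul (k1.trans k2) k3
    (mul_nonneg (tmem hyp _ _ _).1 (tmem hyp _ _ _).1) (tmem hyp _ _ _).1
  have m2 := mul_le_mul g1 g2 hr0.le (tmem hyp _ _ _).1
  have m3 := mul_le_mul m2 hst (by positivity) (mul_nonneg (tmem hyp _ _ _).1 (tmem hyp _ _ _).1)
  calc c < r ^ 4 * c' := hr
    _ = r * r * (r * r * c') := by ring
    _ ≤ _ := m3
    _ = _ := by ring
    _ ≤ _ := m1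
    _ ≤ _ := k4

lemma upper (hyp : DevSetup T Px A) (x y : T) (xt yt : ℝ≥0 → T)
    (hx : Tendsto xt atTop (𝓝 x)) (hy : Tendsto yt atTop (𝓝 y)) {c c' : ℝ} (hc' : 0 < c')
    (hcc : c < c') (hf : ∃ᶠ t in (atTop : Filter ℝ≥0), c' ≤ transDen Px (xt t) t (yt t)) :
    ∃ᶠ t in (atTop : Filter ℝ≥0), c < transDen Px x t y := by
  obtain ⟨r, hr0, hr1, hr⟩ := exists_r hcc
  obtain ⟨δ, hδ, p₀, p₁, hp⟩ := hyp.localMove x (1 - r) (by linarith)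
  obtain ⟨δ', hδ', q₀, q₁, hq⟩ := hyp.localMove y (1 - r) (by linarith)
  rw [frequently_atTop]
  intro b
  obtain ⟨v, hv0, ⟨hv1, hv2⟩, hv3⟩ := (hf.and_eventually (((hx.eventually (ball_mem_nhds x hδ)).and
    (hy.eventually (ball_mem_nhds y hδ'))).and (eventually_ge_atTop b))).exists
  refine ⟨p₀ + v + q₁, hv3.trans (by rw [add_right_comm]; exact le_add_self), ?_⟩
  have g1 : r ≤ transDen Px x p₀ (xt v) := by
    have := (hp (xt v) (by rw [dist_comm]; exact hv1)).1
    linarith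
  have g2 : r ≤ transDen Px (yt v) q₁ y := by
    have := (hq (yt v) (by rw [dist_comm]; exact hv2)).2
    linarith
  have k1 := ck hyp x (xt v) (yt v) p₀ v
  have k2 := ck hyp x (yt v) y (p₀ + v) q₁
  have m1 := mul_le_mul g1 hv0 hc'.le (tmem hyp _ _ _).1
  have m2 := mul_le_mul (m1.trans k1) g2 hr0.le (tmem hyp _ _ _).1
  have hr4 : r ^ 4 ≤ r ^ 2 := pow_le_pow_of_le_one hr0.le hr1.le (by norm_num)
  have := mul_le_mul_of_nonneg_right hr4 hc'.le
  calc c < r ^ 4 * c' := hr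
    _ ≤ r ^ 2 * c' := this
    _ = r * c' * r := by ring
    _ ≤ _ := m2
    _ ≤ _ := k2

lemma main (hyp : DevSetup T Px A) (x y : T) (xt yt : ℝ≥0 → T)
    (hx : Tendsto xt atTop (𝓝 x)) (hy : Tendsto yt atTop (𝓝 y)) :
    Tendsto (fun t : ℝ≥0 => transDen Px (xt t) t (yt t)) atTop
      (𝓝 (limsup (fun t : ℝ≥0 => transDen Px x t y) atTop)) := by
  have hb : IsBoundedUnder (· ≤ ·) (atTop : Filter ℝ≥0) (fun t : ℝ≥0 => transDen Px x t y) :=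
    isBoundedUnder_of ⟨1, fun t => (tmem hyp _ _ _).2⟩
  have hcb : IsBoundedUnder (· ≥ ·) (atTop : Filter ℝ≥0) (fun t : ℝ≥0 => transDen Px x t y) :=
    isBoundedUnder_of ⟨0, fun t => (tmem hyp _ _ _).1⟩
  have hL0 : 0 ≤ limsup (fun t : ℝ≥0 => transDen Px x t y) atTop :=
    le_limsup_of_frequently_le (Eventually.frequently
      (Eventually.of_forall fun t => (tmem hyp _ _ _).1)) hb
  rw [tendsto_order]
  constructor
  · intro c hc
    rcases lt_or_ge c 0 with h0 | h0
    · exact Eventually.of_forall fun t => h0.trans_le (tmem hyp _ _ _).1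
    · obtain ⟨c', h1, h2⟩ := exists_between hc
      exact lower hyp x y xt yt hx hy (h0.trans_lt h1) h1
        (frequently_lt_of_lt_limsup hcb.isCoboundedUnder_le h2)
  · intro c hc
    by_contra hcon
    obtain ⟨c', h1, h2⟩ := exists_between hc
    have hf : ∃ᶠ t in (atTop : Filter ℝ≥0), c ≤ transDen Px (xt t) t (yt t) := by
      rw [not_eventually] at hcon
      exact hcon.mono fun t ht => not_lt.1 ht
    have := upper hyp x y xt yt hx hy (hL0.trans_lt hc) h2 hf
    have hev := eventually_lt_of_limsup_lt h1 hb
    obtain ⟨t, ht1, ht2⟩ := (this.and_eventually hev).exists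
    linarith

end

end DevAux

theorem stmt2 (Px : S → C(ℝ≥0, S) → ℝ) (A : Set S) (hyp : DevSetup S Px A) :
    ∃ PL : S → S → ℝ, ∀ (x y : S) (xt yt : ℝ≥0 → S),
      Tendsto xt atTop (𝓝 x) → Tendsto yt atTop (𝓝 y) →
      Tendsto (fun t : ℝ≥0 => transDen Px (xt t) t (yt t)) atTop (𝓝 (PL x y)) := by
  refine ⟨fun x y => limsup (fun t : ℝ≥0 => transDen Px x t y) atTop, ?_⟩
  intro x y xt yt hx hy
  exact DevAux.main hyp x y xt yt hx hy
end
end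

section
/- The long-time transition limit satisfies the idempotent Chapman–Kolmogorov equation: for all x, y ∈ S, Π(x,y) = sup_{z∈S} Π(x,z) · Π(z,y). -/
open Filter Topology Metric Set MeasureTheory
open scoped NNReal

noncomputable section

variable {S : Type*} [MetricSpace S]

lemma bs_le {ι : Type*} {s : Set ι} {f : ι → ℝ} {c : ℝ} (hc : 0 ≤ c) (h : ∀ x ∈ s, f x ≤ c) :
    (⨆ x ∈ s, f x) ≤ c :=
  Real.iSup_le (fun x => Real.iSup_le (fun hx => h x hx) hc) hc

lemma le_bs {ι : Type*} {s : Set ι} {f : ι → ℝ} (h : ∀ x, f x ≤ 1) {x : ι} (hx : x ∈ s) :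
    f x ≤ ⨆ x ∈ s, f x := by
  have hb : BddAbove (Set.range fun x => ⨆ (_ : x ∈ s), f x) := by
    refine ⟨1, ?_⟩
    rintro _ ⟨y, rfl⟩
    exact Real.iSup_le (fun _ => h y) zero_le_one
  have h1 := le_ciSup hb x
  simpa [hx] using h1

lemma bs_nonneg {ι : Type*} {s : Set ι} {f : ι → ℝ} (h : ∀ x, 0 ≤ f x) :
    0 ≤ ⨆ x ∈ s, f x :=
  Real.iSup_nonneg fun x => Real.iSup_nonneg fun _ => h x

lemma tD_nonneg {Px : S → C(ℝ≥0, S) → ℝ} {A : Set S} (hyp : DevSetup S Px A) (x t y) :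
    0 ≤ transDen Px x t y :=
  bs_nonneg fun X => ((hyp.dev x).1 X).1

lemma tD_le_one {Px : S → C(ℝ≥0, S) → ℝ} {A : Set S} (hyp : DevSetup S Px A) (x t y) :
    transDen Px x t y ≤ 1 :=
  bs_le zero_le_one fun X _ => ((hyp.dev x).1 X).2

lemma le_tD {Px : S → C(ℝ≥0, S) → ℝ} {A : Set S} (hyp : DevSetup S Px A) (x t y)
    (X : C(ℝ≥0, S)) (h : X t = y) : Px x X ≤ transDen Px x t y :=
  le_bs (s := {X : C(ℝ≥0, S) | X t = y}) (f := Px x) (fun X => ((hyp.dev x).1 X).2) h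

/-- Concatenation of paths. -/
lemma exists_concat (X Y : C(ℝ≥0, S)) (s : ℝ≥0) (h : Y 0 = X s) :
    ∃ Z : C(ℝ≥0, S), (∀ u ≤ s, Z u = X u) ∧ ∀ t, Z (s + t) = Y t := by
  refine ⟨⟨fun u => if u ≤ s then X u else Y (u - s), ?_⟩, ?_, ?_⟩
  · refine Continuous.if_le X.continuous
      (Y.continuous.comp (continuous_id.sub continuous_const)) continuous_id continuous_const ?_
    intro u hu
    subst hu
    simp [h]
  · intro u hu
    simp [hu]
  · intro t
    by_cases ht : t = 0
    · subst ht; simp [h]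
    · have : ¬ (s + t ≤ s) := by
        simpa using ht
      simp [ht]

lemma ck_ge {Px : S → C(ℝ≥0, S) → ℝ} {A : Set S} (hyp : DevSetup S Px A) (x z y : S)
    (s t : ℝ≥0) :
    transDen Px x s z * transDen Px z t y ≤ transDen Px x (s + t) y := by
  have n0 := tD_nonneg hyp x (s + t) y
  have key : ∀ X Y : C(ℝ≥0, S), X s = z → Y t = y →
      Px x X * Px z Y ≤ transDen Px x (s + t) y := by
    intro X Y hX hY
    by_cases h0 : Y 0 = z
    · obtain ⟨Z, hZ1, hZ2⟩ := exists_concat X Y s (h0.trans hX.symm)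
      have h1 := le_tD hyp x (s + t) y Z ((hZ2 t).trans hY)
      refine le_trans ?_ h1
      rw [hyp.markov x Z s, hZ1 s le_rfl, hX]
      have h2 : pshift s Z = Y := by
        ext u; exact hZ2 u
      rw [h2]
      refine mul_le_mul_of_nonneg_right ?_ ((hyp.dev z).1 Y).1
      exact le_bs (s := {X' : C(ℝ≥0, S) | ∀ u ≤ s, X' u = Z u}) (f := Px x)
        (fun X => ((hyp.dev x).1 X).2) (fun u hu => (hZ1 u hu).symm)
    · rw [hyp.start z Y h0, mul_zero]; exact n0
  rcases (tD_nonneg hyp z t y).eq_or_lt with h | h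
  · rw [← h, mul_zero]; exact n0
  rw [← le_div_iff₀ h]
  refine bs_le (div_nonneg n0 h.le) fun X hX => ?_
  rw [le_div_iff₀ h]
  rcases ((hyp.dev x).1 X).1.eq_or_lt with h' | h'
  · rw [← h', zero_mul]; exact n0
  rw [mul_comm, ← le_div_iff₀ h']
  refine bs_le (div_nonneg n0 h'.le) fun Y hY => ?_
  rw [le_div_iff₀ h', mul_comm]
  exact key X Y hX hY

lemma ck_lt {Px : S → C(ℝ≥0, S) → ℝ} {A : Set S} (hyp : DevSetup S Px A) (x y : S)
    (s t : ℝ≥0) {c : ℝ} (hc : 0 ≤ c) (h : c < transDen Px x (s + t) y) :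
    ∃ z, c < transDen Px x s z * transDen Px z t y := by
  by_contra! hn
  refine absurd h (not_lt.2 (bs_le hc fun X hX => ?_))
  refine le_trans ?_ (hn (X s))
  rw [hyp.markov x X s]
  refine mul_le_mul ?_ (le_tD hyp _ _ _ _ hX) ((hyp.dev _).1 _).1 (tD_nonneg hyp _ _ _)
  exact bs_le (tD_nonneg hyp _ _ _) fun X' hX' => le_tD hyp _ _ _ _ (hX' s le_rfl)

theorem stmt3 (Px : S → C(ℝ≥0, S) → ℝ) (A : Set S) (hyp : DevSetup S Px A)
    (PL : S → S → ℝ)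
    (hPL : ∀ x y : S, Tendsto (fun t : ℝ≥0 => transDen Px x t y) atTop (𝓝 (PL x y))) :
    ∀ x y : S, PL x y = ⨆ z : S, PL x z * PL z y := by
  
  intro x y
  have hP0 : ∀ x y, 0 ≤ PL x y := fun x y =>
    ge_of_tendsto' (hPL x y) fun t => tD_nonneg hyp x t y
  have hge : ∀ z, PL x z * PL z y ≤ PL x y := by
    intro z
    have h2 : Tendsto (fun t : ℝ≥0 => t + t) atTop atTop :=
      tendsto_atTop_mono (fun t => le_self_add) tendsto_id
    exact le_of_tendsto_of_tendsto' ((hPL x z).mul (hPL z y)) ((hPL x y).comp h2)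
      fun t => ck_ge hyp x z y t t
  have hbdd : BddAbove (Set.range fun z => PL x z * PL z y) :=
    ⟨PL x y, by rintro _ ⟨z, rfl⟩; exact hge z⟩
  apply le_antisymm _ (Real.iSup_le hge (hP0 x y))
  set M := ⨆ z, PL x z * PL z y with hM
  have hM0 : 0 ≤ M := Real.iSup_nonneg fun z => mul_nonneg (hP0 _ _) (hP0 _ _)
  refine le_of_forall_lt_imp_le_of_dense fun c hcL => ?_
  rcases le_or_gt c 0 with hc | hc
  · exact hc.trans hM0
  obtain ⟨K, hK, hlim⟩ := hyp.tight {x} isCompact_singleton c hc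
  have h2 : Tendsto (fun t : ℝ≥0 => t + t) atTop atTop :=
    tendsto_atTop_mono (fun t => le_self_add) tendsto_id
  have hF : ∀ t : ℝ≥0, ∀ x' : S, (⨆ y ∈ Kᶜ, transDen Px x' t y) ≤ 1 := fun t x' =>
    bs_le zero_le_one fun y _ => tD_le_one hyp _ _ _
  have hev1 : ∀ᶠ t : ℝ≥0 in atTop, (⨆ x' ∈ ({x} : Set S), ⨆ y ∈ Kᶜ, transDen Px x' t y) < c := by
    refine Filter.eventually_lt_of_limsup_lt hlim ?_
    exact isBoundedUnder_of ⟨1, fun t => bs_le zero_le_one fun x' _ => hF t x'⟩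
  have hev : ∀ᶠ t : ℝ≥0 in atTop, ∃ z ∈ K, c < transDen Px x t z * transDen Px z t y := by
    filter_upwards [hev1, ((hPL x y).comp h2).eventually_const_lt hcL] with t h1 h3
    obtain ⟨z, hz⟩ := ck_lt hyp x y t t hc.le h3
    refine ⟨z, ?_, hz⟩
    by_contra hzK
    have e1 : transDen Px x t z ≤ ⨆ y ∈ Kᶜ, transDen Px x t y :=
      le_bs (s := Kᶜ) (f := fun y => transDen Px x t y) (fun y => tD_le_one hyp _ _ _) hzK
    have e2 : (⨆ y ∈ Kᶜ, transDen Px x t y) ≤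
        ⨆ x' ∈ ({x} : Set S), ⨆ y ∈ Kᶜ, transDen Px x' t y :=
      le_bs (s := ({x} : Set S)) (f := fun x' => ⨆ y ∈ Kᶜ, transDen Px x' t y)
        (fun x' => hF t x') (Set.mem_singleton x)
    have e3 := mul_le_of_le_one_right (tD_nonneg hyp x t z) (tD_le_one hyp z t y)
    linarith
  have hex : ∃ w : ℝ≥0 → S, ∀ᶠ t : ℝ≥0 in atTop,
      w t ∈ K ∧ c < transDen Px x t (w t) * transDen Px (w t) t y := by
    classical
    refine ⟨fun t => if h : ∃ z ∈ K, c < transDen Px x t z * transDen Px z t y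
      then h.choose else x, ?_⟩
    filter_upwards [hev] with t ht
    rw [dif_pos ht]
    exact ht.choose_spec
  obtain ⟨w, hw⟩ := hex
  obtain ⟨z, -, hz⟩ := hK.exists_mapClusterPt_of_frequently
    (hw.mono fun t ht => ht.1).frequently
  have hmain : ∀ r : ℝ, r ∈ Set.Ioo (0:ℝ) 1 → r * r * c ≤ M := by
    intro r hr
    refine le_trans ?_ (le_ciSup hbdd z)
    obtain ⟨δ, hδ, t₀, t₁, hloc⟩ := hyp.localMove z (1 - r) (by linarith [hr.2])
    have hfreq : ∃ᶠ t in atTop, dist z (w t) < δ :=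
      (hz.frequently (Metric.ball_mem_nhds z hδ)).mono fun t ht => by
        rw [dist_comm]; exact ht
    have hT1 : Tendsto (fun t : ℝ≥0 => t + t₁) atTop atTop :=
      tendsto_atTop_mono (fun t => le_self_add) tendsto_id
    have hT0 : Tendsto (fun t : ℝ≥0 => t₀ + t) atTop atTop :=
      tendsto_atTop_mono (fun t => le_add_self) tendsto_id
    have hlim2 := ((hPL x z).comp hT1).mul ((hPL z y).comp hT0)
    refine ge_of_tendsto_of_frequently hlim2 ?_
    refine (hfreq.and_eventually hw).mono fun t ht => ?_
    obtain ⟨hd, -, hlt⟩ := ht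
    obtain ⟨ha, hb⟩ := hloc (w t) hd
    have g1 := ck_ge hyp x (w t) z t t₁
    have g2 := ck_ge hyp z (w t) y t₀ t
    have p1 := tD_nonneg hyp x t (w t)
    have p2 := tD_nonneg hyp (w t) t y
    have q1 : transDen Px x t (w t) * r ≤ transDen Px x (t + t₁) z :=
      (mul_le_mul_of_nonneg_left (by linarith) p1).trans g1
    have q2 : r * transDen Px (w t) t y ≤ transDen Px z (t₀ + t) y :=
      (mul_le_mul_of_nonneg_right (by linarith) p2).trans g2
    have q3 := mul_le_mul q1 q2 (mul_nonneg hr.1.le p2) (tD_nonneg hyp _ _ _)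
    have q4 := mul_le_mul_of_nonneg_left hlt.le (mul_nonneg hr.1.le hr.1.le)
    simp only [Function.comp]
    linarith [q3, q4]
  have hcont : Tendsto (fun r : ℝ => r * r * c) (𝓝[<] 1) (𝓝 (1 * 1 * c)) :=
    ((continuous_id.mul continuous_id).mul continuous_const).continuousWithinAt.tendsto
  rw [one_mul, one_mul] at hcont
  refine le_of_tendsto hcont ?_
  filter_upwards [Ioo_mem_nhdsLT (zero_lt_one' ℝ)] with r hr using hmain r hr
end
end

section
/- The function (x,y) ↦ Π(x,y) is continuous on S × S; for every compact K ⊆ S and every γ > 0 the set ⋃_{x∈K} {y ∈ S : Π(x,y) ≥ γ} is compact; and sup_{y∈S} Π(x,y) = 1 for every x ∈ S, so that Π(x,·) is a deviability density on S for each x. -/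
open Filter Topology Metric Set MeasureTheory
open scoped NNReal

noncomputable section

variable {S : Type*} [MetricSpace S]

theorem le_bsup_aux {ι : Type*} (f : ι → ℝ) (h : ∀ i, f i ∈ Set.Icc (0:ℝ) 1) (s : Set ι)
    {i : ι} (hi : i ∈ s) : f i ≤ ⨆ i ∈ s, f i := by
  have hb : BddAbove (Set.range fun i => ⨆ (_ : i ∈ s), f i) := by
    refine ⟨1, ?_⟩
    rintro _ ⟨j, rfl⟩
    exact Real.iSup_le (fun _ => (h j).2) zero_le_one
  refine le_trans ?_ (le_ciSup hb i)
  simp [hi]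

theorem bsup_le_aux {ι : Type*} (f : ι → ℝ) (s : Set ι) {c : ℝ} (hc : 0 ≤ c)
    (h : ∀ i ∈ s, f i ≤ c) : ⨆ i ∈ s, f i ≤ c :=
  Real.iSup_le (fun i => Real.iSup_le (fun hi => h i hi) hc) hc

theorem bsup_nonneg_aux {ι : Type*} (f : ι → ℝ) (s : Set ι)
    (h : ∀ i, 0 ≤ f i) : 0 ≤ ⨆ i ∈ s, f i :=
  Real.iSup_nonneg (fun i => Real.iSup_nonneg (fun _ => h i))

section aux
variable {Px : S → C(ℝ≥0, S) → ℝ} {A : Set S}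

theorem trans_mem (hyp : DevSetup S Px A) (x : S) (t : ℝ≥0) (y : S) :
    transDen Px x t y ∈ Set.Icc (0:ℝ) 1 :=
  ⟨bsup_nonneg_aux _ _ fun X => ((hyp.dev x).1 X).1,
    bsup_le_aux _ _ zero_le_one fun X _ => ((hyp.dev x).1 X).2⟩

theorem le_trans_den (hyp : DevSetup S Px A) (x : S) (t : ℝ≥0) (X : C(ℝ≥0, S)) :
    Px x X ≤ transDen Px x t (X t) :=
  le_bsup_aux (Px x) (hyp.dev x).1 {X' | X' t = X t} rfl

theorem path_mul (hyp : DevSetup S Px A) (x z : S) (s t : ℝ≥0) (X Y : C(ℝ≥0, S))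
    (hX : X s = z) : Px x X * Px z Y ≤ transDen Px x (s + t) (Y t) := by
  by_cases hY : Y 0 = z
  · have hc : Continuous (fun u : ℝ≥0 => if u ≤ s then X u else Y (u - s)) := by
      refine Continuous.if_le X.continuous
        (Y.continuous.comp (continuous_id.sub continuous_const)) continuous_id
        continuous_const ?_
      intro u hu
      simp [hu, hX, hY]
    let Z : C(ℝ≥0, S) := ⟨_, hc⟩
    have hZ1 : ∀ u ≤ s, X u = Z u := by
      intro u hu
      simp [Z, hu]
    have hZ2 : ∀ u, Z (s + u) = Y u := by
      intro u
      by_cases hu : u = 0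
      · subst hu
        simp [Z, hX, hY]
      · have : ¬ (s + u ≤ s) := by
          simpa using hu
        simp [Z, hu]
    have hsh : pshift s Z = Y := by
      ext u
      exact hZ2 u
    have hZs : Z s = z := by rw [← hZ1 s le_rfl, hX]
    have h1 := hyp.markov x Z s
    rw [hsh, hZs] at h1
    have h2 := le_trans_den hyp x (s + t) Z
    rw [hZ2, h1] at h2
    refine le_trans (mul_le_mul_of_nonneg_right ?_ ((hyp.dev z).1 Y).1) h2
    exact le_bsup_aux (Px x) (hyp.dev x).1 {X' | ∀ u ≤ s, X' u = Z u} hZ1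
  · rw [hyp.start z Y hY, mul_zero]
    exact (trans_mem hyp _ _ _).1

theorem trans_mul (hyp : DevSetup S Px A) (x y z : S) (s t : ℝ≥0) :
    transDen Px x s z * transDen Px z t y ≤ transDen Px x (s + t) y := by
  have hR := (trans_mem hyp x (s + t) y).1
  have key : ∀ X : C(ℝ≥0, S), X s = z →
      Px x X * transDen Px z t y ≤ transDen Px x (s + t) y := by
    intro X hX
    rcases eq_or_lt_of_le ((hyp.dev x).1 X).1 with h0 | h0
    · rw [← h0, zero_mul]; exact hR
    · rw [mul_comm, ← le_div_iff₀ h0]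
      refine bsup_le_aux _ _ (div_nonneg hR h0.le) ?_
      rintro Y (rfl : Y t = y)
      rw [le_div_iff₀ h0, mul_comm]
      exact path_mul hyp x z s t X Y hX
  rcases eq_or_lt_of_le (trans_mem hyp z t y).1 with h0 | h0
  · rw [← h0, mul_zero]; exact hR
  · rw [← le_div_iff₀ h0]
    refine bsup_le_aux _ _ (div_nonneg hR h0.le) ?_
    intro X hX
    rw [le_div_iff₀ h0]
    exact key X hX

theorem exists_one (hyp : DevSetup S Px A) (x : S) : ∃ X, Px x X = 1 := by
  obtain ⟨h01, hs, hc⟩ := hyp.dev x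
  have hne : Nonempty C(ℝ≥0, S) := ⟨ContinuousMap.const _ x⟩
  obtain ⟨X0, hX0⟩ := exists_lt_of_lt_ciSup (show (1/2 : ℝ) < ⨆ X, Px x X by
    rw [hs]; norm_num)
  have hu : UpperSemicontinuous (Px x) :=
    UpperSemicontinuous.comp hyp.usc (g := fun X => (x, X)) (by fun_prop)
  obtain ⟨X, hX, hm⟩ := (hu.upperSemicontinuousOn _).exists_isMaxOn
    ⟨X0, hX0.le⟩ (hc (1/2) (by norm_num))
  refine ⟨X, le_antisymm (h01 X).2 ?_⟩
  rw [← hs]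
  refine ciSup_le fun Y => ?_
  by_cases hY : 1/2 ≤ Px x Y
  · exact hm hY
  · exact (not_le.1 hY).le.trans hX

end aux

theorem stmt4 (Px : S → C(ℝ≥0, S) → ℝ) (A : Set S) (hyp : DevSetup S Px A)
    (PL : S → S → ℝ)
    (hPL : ∀ x y : S, Tendsto (fun t : ℝ≥0 => transDen Px x t y) atTop (𝓝 (PL x y))) :
    Continuous (fun q : S × S => PL q.1 q.2) ∧
    (∀ K : Set S, IsCompact K → ∀ γ : ℝ, 0 < γ →
      IsCompact (⋃ x ∈ K, {y : S | γ ≤ PL x y})) ∧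
    ∀ x : S, (⨆ y : S, PL x y) = 1 := by
  have h0 : ∀ x y, 0 ≤ PL x y := fun x y =>
    ge_of_tendsto' (hPL x y) fun t => (trans_mem hyp x t y).1
  have h1 : ∀ x y, PL x y ≤ 1 := fun x y =>
    le_of_tendsto' (hPL x y) fun t => (trans_mem hyp x t y).2
  have hleft : ∀ x z y s, transDen Px x s z * PL z y ≤ PL x y := by
    intro x z y s
    have ht : Tendsto (fun t : ℝ≥0 => s + t) atTop atTop :=
      tendsto_atTop_mono (fun t => le_add_self) tendsto_id
    exact le_of_tendsto_of_tendsto' ((hPL z y).const_mul _) ((hPL x y).comp ht)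
      fun t => trans_mul hyp x y z s t
  have hright : ∀ x z y s, PL x z * transDen Px z s y ≤ PL x y := by
    intro x z y s
    have ht : Tendsto (fun t : ℝ≥0 => t + s) atTop atTop :=
      tendsto_atTop_mono (fun t => le_self_add) tendsto_id
    exact le_of_tendsto_of_tendsto' ((hPL x z).mul_const _) ((hPL x y).comp ht)
      fun t => trans_mul hyp x y z t s
  have hcont : Continuous (fun q : S × S => PL q.1 q.2) := by
    rw [Metric.continuous_iff]
    rintro ⟨x, y⟩ ε hε
    obtain ⟨δ, hδ, t0, t1, hx⟩ := hyp.localMove x (ε/2) (by linarith)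
    obtain ⟨δ', hδ', s0, s1, hy⟩ := hyp.localMove y (ε/2) (by linarith)
    refine ⟨min δ δ', lt_min hδ hδ', ?_⟩
    rintro ⟨x', y'⟩ hd
    rw [Prod.dist_eq, max_lt_iff, lt_min_iff, lt_min_iff] at hd
    obtain ⟨hx1, hx2⟩ := hx x' (by rw [dist_comm]; exact hd.1.1)
    obtain ⟨hy1, hy2⟩ := hy y' (by rw [dist_comm]; exact hd.2.2)
    have e1 := hleft x x' y' t0
    have e2 := hleft x' x y t1
    have e3 := hright x y y' s0
    have e3' := hright x' y y' s0
    have e4 := hright x y' y s1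
    have a1 := h0 x' y'
    have a2 := h1 x' y'
    have b1 := h0 x y
    have b2 := h1 x y
    have c1 := h0 x y'
    have c2 := h1 x y'
    have d1 := h0 x' y
    have d2 := h1 x' y
    rw [Real.dist_eq, abs_lt]
    constructor
    · simp only
      nlinarith
    · simp only
      nlinarith
  refine ⟨hcont, ?_, ?_⟩
  · intro K hK γ hγ
    obtain ⟨K2, hK2, hlim⟩ := hyp.tight K hK γ hγ
    have hin : ∀ x t, ∀ _ : S, (⨆ y ∈ K2ᶜ, transDen Px x t y) ∈ Set.Icc (0:ℝ) 1 :=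
      fun x t _ => ⟨bsup_nonneg_aux _ _ fun y => (trans_mem hyp x t y).1,
        bsup_le_aux _ _ zero_le_one fun y _ => (trans_mem hyp x t y).2⟩
    obtain ⟨γ', hγ1, hγ2⟩ := exists_between hlim
    have hev := Filter.eventually_lt_of_limsup_lt hγ1
      (Filter.isBoundedUnder_of ⟨1, fun t => bsup_le_aux _ _ zero_le_one
        fun x _ => (hin x t x).2⟩)
    have hout : ∀ x ∈ K, ∀ y, γ ≤ PL x y → y ∈ K2 := by
      intro x hx y hy
      by_contra hyK
      have : PL x y ≤ γ' := by
        refine le_of_tendsto (hPL x y) ?_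
        filter_upwards [hev] with t ht
        refine le_trans ?_ ht.le
        refine le_trans ?_ (le_bsup_aux (fun x => ⨆ y ∈ K2ᶜ, transDen Px x t y)
          (fun x => hin x t x) K hx)
        exact le_bsup_aux (fun y => transDen Px x t y) (fun y => trans_mem hyp x t y) K2ᶜ hyK
      linarith
    have hcl : IsClosed {q : S × S | γ ≤ PL q.1 q.2} := isClosed_le continuous_const hcont
    have hcomp := ((hK.prod hK2).inter_right hcl).image continuous_snd
    convert hcomp using 1
    ext y
    simp only [Set.mem_iUnion, Set.mem_ofPred_eq, Set.mem_image, Set.mem_inter_iff,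
      Set.mem_prod, Prod.exists, exists_prop]
    constructor
    · rintro ⟨x, hx, hy⟩
      exact ⟨x, y, ⟨⟨hx, hout x hx y hy⟩, hy⟩, rfl⟩
    · rintro ⟨x, y', ⟨⟨hx, -⟩, hy⟩, rfl⟩
      exact ⟨x, hx, hy⟩
  · intro x
    have hne : Nonempty S := ⟨x⟩
    refine le_antisymm (ciSup_le (h1 x)) ?_
    refine le_of_forall_pos_le_add fun ε hε => ?_
    obtain ⟨X, hX⟩ := exists_one hyp x
    obtain ⟨δ, hδ, hn⟩ := hyp.nearA ε hε
    obtain ⟨t, ht⟩ := exists_lt_of_ciInf_lt (show (⨅ t : ℝ≥0, infDist (X t) A) < δ by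
      rw [hyp.attract x X hX]; exact hδ)
    obtain ⟨s0, s1, -, -, a, ha, hs0, -⟩ := hn (X t) ht
    have haa : PL a a = 1 := by
      refine le_antisymm (h1 a a) (ge_of_tendsto' (hPL a a) fun s => ?_)
      have := le_trans_den hyp a s (ContinuousMap.const ℝ≥0 a)
      rw [hyp.equil a ha] at this
      exact this
    have e1 := hleft (X t) a a s0
    have e2 := hleft x (X t) a t
    have e3 := le_trans_den hyp x t X
    rw [hX] at e3
    have e4 : PL x a ≤ ⨆ y, PL x y := le_ciSup ⟨1, by rintro _ ⟨y, rfl⟩; exact h1 x y⟩ a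
    have e5 := h0 (X t) a
    rw [haa] at e1
    nlinarith
end
end

section
/- For any deviability density ρ on S and any subset A' ⊆ A, the function x ↦ Φ_ρ(A',x) = sup_{a∈A'} ρ(a) Π(a,x) is continuous on S and upper compact, i.e. the set {x ∈ S : Φ_ρ(A',x) ≥ γ} is compact for every γ > 0. -/
open Filter Topology Metric Set MeasureTheory
open scoped NNReal

noncomputable section

variable {S : Type*} [MetricSpace S]

theorem aux_le_biSup {ι : Type*} (s : Set ι) (f : ι → ℝ) (c : ℝ) (hc : 0 ≤ c)
    (h1 : ∀ i ∈ s, f i ≤ c) (i : ι) (hi : i ∈ s) : f i ≤ ⨆ j ∈ s, f j := by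
  have hb : BddAbove (Set.range fun j => ⨆ (_ : j ∈ s), f j) := by
    refine ⟨c, ?_⟩
    rintro _ ⟨j, rfl⟩
    exact Real.iSup_le (fun hj => h1 j hj) hc
  have h := le_ciSup hb i
  simpa [hi] using h

theorem aux_biSup_le {ι : Type*} (s : Set ι) (f : ι → ℝ) (c : ℝ) (hc : 0 ≤ c)
    (h1 : ∀ i ∈ s, f i ≤ c) : ⨆ j ∈ s, f j ≤ c :=
  Real.iSup_le (fun j => Real.iSup_le (fun hj => h1 j hj) hc) hc

theorem aux_biSup_nonneg {ι : Type*} (s : Set ι) (f : ι → ℝ)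
    (h1 : ∀ i, 0 ≤ f i) : 0 ≤ ⨆ j ∈ s, f j :=
  Real.iSup_nonneg (fun j => Real.iSup_nonneg (fun _ => h1 j))

theorem aux_concat (X Y : C(ℝ≥0, S)) (s : ℝ≥0) (h : X s = Y 0) :
    ∃ Z : C(ℝ≥0, S), (∀ u ≤ s, Z u = X u) ∧ ∀ t, Z (s + t) = Y t := by
  refine ⟨⟨fun u => if u ≤ s then X u else Y (u - s), ?_⟩, ?_, ?_⟩
  · refine Continuous.if_le X.continuous (Y.continuous.comp (by fun_prop)) continuous_id
      continuous_const ?_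
    rintro u rfl
    simpa using h
  · intro u hu
    simp [hu]
  · intro t
    by_cases ht : t = 0
    · subst ht
      simp [h]
    · have : ¬ (s + t ≤ s) := by
        have := pos_iff_ne_zero.mpr ht
        simp [ht]
      simp [ht]

section
variable {Px : S → C(ℝ≥0, S) → ℝ} {A : Set S}

theorem aux_T_nonneg (hyp : DevSetup S Px A) (x : S) (t : ℝ≥0) (y : S) :
    0 ≤ transDen Px x t y :=
  aux_biSup_nonneg _ _ (fun X => ((hyp.dev x).1 X).1)

theorem aux_T_le (hyp : DevSetup S Px A) (x : S) (t : ℝ≥0) (y : S) :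
    transDen Px x t y ≤ 1 :=
  aux_biSup_le _ _ _ zero_le_one (fun X _ => ((hyp.dev x).1 X).2)

theorem aux_T_mul (hyp : DevSetup S Px A) (x y z : S) (s t : ℝ≥0) :
    transDen Px x s y * transDen Px y t z ≤ transDen Px x (s + t) z := by
  have key : ∀ X : C(ℝ≥0, S), X s = y → ∀ Y : C(ℝ≥0, S), Y t = z →
      Px x X * Px y Y ≤ transDen Px x (s + t) z := by
    intro X hX Y hY
    by_cases h0 : Y 0 = y
    · obtain ⟨Z, hZ1, hZ2⟩ := aux_concat X Y s (hX.trans h0.symm)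
      have hZs : Z s = y := (hZ1 s le_rfl).trans hX
      have hsh : pshift s Z = Y := by
        ext t
        exact hZ2 t
      have hm := hyp.markov x Z s
      rw [hZs, hsh] at hm
      have h1 : Px x X ≤ ⨆ X' ∈ {X' : C(ℝ≥0, S) | ∀ u ≤ s, X' u = Z u}, Px x X' :=
        aux_le_biSup {X' : C(ℝ≥0, S) | ∀ u ≤ s, X' u = Z u} (Px x) 1 zero_le_one
          (fun X _ => ((hyp.dev x).1 X).2) X (fun u hu => (hZ1 u hu).symm)
      have h2 : Px x Z ≤ transDen Px x (s + t) z :=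
        aux_le_biSup {X' : C(ℝ≥0, S) | X' (s + t) = z} (Px x) 1 zero_le_one
          (fun X _ => ((hyp.dev x).1 X).2) Z ((hZ2 t).trans hY)
      refine le_trans ?_ h2
      rw [hm]
      exact mul_le_mul_of_nonneg_right h1 ((hyp.dev y).1 Y).1
    · rw [hyp.start y Y h0, mul_zero]
      exact aux_T_nonneg hyp _ _ _
  have hT := aux_T_nonneg hyp x (s + t) z
  have step : ∀ X : C(ℝ≥0, S), X s = y →
      Px x X * transDen Px y t z ≤ transDen Px x (s + t) z := by
    intro X hX
    rcases ((hyp.dev x).1 X).1.eq_or_lt with h0 | h0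
    · rw [← h0, zero_mul]; exact hT
    · rw [mul_comm, ← le_div_iff₀ h0]
      refine aux_biSup_le _ _ _ (by positivity) (fun Y hY => ?_)
      rw [le_div_iff₀ h0, mul_comm]
      exact key X hX Y hY
  rcases (aux_T_nonneg hyp y t z).eq_or_lt with h0 | h0
  · rw [← h0, mul_zero]; exact hT
  · rw [← le_div_iff₀ h0]
    refine aux_biSup_le _ _ _ (by positivity) (fun X hX => ?_)
    rw [le_div_iff₀ h0]
    exact step X hX

theorem aux_PL_mul (hyp : DevSetup S Px A) (PL : S → S → ℝ)
    (hPL : ∀ x y : S, Tendsto (fun t : ℝ≥0 => transDen Px x t y) atTop (𝓝 (PL x y)))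
    (a x y : S) (t : ℝ≥0) : PL a x * transDen Px x t y ≤ PL a y := by
  have h1 := (hPL a x).mul_const (transDen Px x t y)
  have h2 : Tendsto (fun s : ℝ≥0 => transDen Px a (s + t) y) atTop (𝓝 (PL a y)) :=
    (hPL a y).comp (tendsto_atTop_mono (fun s => le_self_add) tendsto_id)
  exact le_of_tendsto_of_tendsto' h1 h2 (fun s => aux_T_mul hyp a x y s t)

end

theorem stmt5 (Px : S → C(ℝ≥0, S) → ℝ) (A : Set S) (hyp : DevSetup S Px A)
    (PL : S → S → ℝ)
    (hPL : ∀ x y : S, Tendsto (fun t : ℝ≥0 => transDen Px x t y) atTop (𝓝 (PL x y)))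
    (ρ : S → ℝ) (hρ : IsDeviabilityDensity ρ) (A' : Set S) (hA' : A' ⊆ A) :
    Continuous (fun x : S => ⨆ a ∈ A', ρ a * PL a x) ∧
    ∀ γ : ℝ, 0 < γ → IsCompact {x : S | γ ≤ ⨆ a ∈ A', ρ a * PL a x} := by
  have hPL0 : ∀ x y, 0 ≤ PL x y := fun x y =>
    ge_of_tendsto' (hPL x y) (fun t => aux_T_nonneg hyp x t y)
  have hPL1 : ∀ x y, PL x y ≤ 1 := fun x y =>
    le_of_tendsto' (hPL x y) (fun t => aux_T_le hyp x t y)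
  have hf0 : ∀ x a, 0 ≤ ρ a * PL a x := fun x a => mul_nonneg (hρ.1 a).1 (hPL0 a x)
  have hf1 : ∀ x a, ρ a * PL a x ≤ 1 := fun x a =>
    mul_le_one₀ (hρ.1 a).2 (hPL0 a x) (hPL1 a x)
  have hP0 : ∀ x, 0 ≤ ⨆ a ∈ A', ρ a * PL a x := fun x => aux_biSup_nonneg _ _ (hf0 x)
  have hP1 : ∀ x, ⨆ a ∈ A', ρ a * PL a x ≤ 1 := fun x =>
    aux_biSup_le _ _ _ zero_le_one (fun a _ => hf1 x a)
  have hmul : ∀ x y (ε : ℝ) (t : ℝ≥0), 0 < ε → 1 - ε < transDen Px x t y →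
      (⨆ a ∈ A', ρ a * PL a x) ≤ (⨆ a ∈ A', ρ a * PL a y) + ε := by
    intro x y ε t hε ht
    refine aux_biSup_le _ _ _ (by linarith [hP0 y]) (fun a ha => ?_)
    have h1 := aux_le_biSup A' (fun a => ρ a * PL a y) 1 zero_le_one
      (fun a _ => hf1 y a) a ha
    have h2 := mul_le_mul_of_nonneg_left (aux_PL_mul hyp PL hPL a x y t) (hρ.1 a).1
    have h3 := mul_le_mul_of_nonneg_left ht.le (hf0 x a)
    have h4 := mul_le_mul_of_nonneg_right (hf1 x a) hε.le
    nlinarith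
  have hcont : Continuous (fun x : S => ⨆ a ∈ A', ρ a * PL a x) := by
    rw [Metric.continuous_iff]
    intro x ε hε
    obtain ⟨δ, hδ, t₀, t₁, h⟩ := hyp.localMove x (ε / 2) (by positivity)
    refine ⟨δ, hδ, fun y hy => ?_⟩
    rw [dist_comm] at hy
    obtain ⟨h1, h2⟩ := h y hy
    have e1 := hmul x y _ t₀ (by positivity) h1
    have e2 := hmul y x _ t₁ (by positivity) h2
    rw [Real.dist_eq, abs_lt]
    constructor <;> linarith
  refine ⟨hcont, fun γ hγ => ?_⟩
  have hclosed : IsClosed {x : S | γ ≤ ⨆ a ∈ A', ρ a * PL a x} :=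
    isClosed_le continuous_const hcont
  by_cases hγ1 : 1 < γ
  · have : {x : S | γ ≤ ⨆ a ∈ A', ρ a * PL a x} = ∅ := by
      ext x
      simp only [Set.mem_ofPred_eq, Set.mem_empty_iff_false, iff_false, not_le]
      exact (hP1 x).trans_lt hγ1
    rw [this]
    exact isCompact_empty
  push Not at hγ1
  obtain ⟨K₂, hK₂, hlim⟩ := hyp.tight {x | γ / 2 ≤ ρ x}
    (hρ.2.2 _ ⟨by positivity, by linarith⟩) (γ / 2) (by positivity)
  refine hK₂.of_isClosed_subset hclosed (fun x hx => ?_)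
  by_contra hxK
  have hin0 : ∀ t a, 0 ≤ ⨆ y ∈ K₂ᶜ, transDen Px a t y := fun t a =>
    aux_biSup_nonneg _ _ (aux_T_nonneg hyp a t)
  have hin1 : ∀ t a, ⨆ y ∈ K₂ᶜ, transDen Px a t y ≤ 1 := fun t a =>
    aux_biSup_le _ _ _ zero_le_one (fun y _ => aux_T_le hyp a t y)
  obtain ⟨c, hc1, hc2⟩ := exists_between hlim
  have hev := eventually_lt_of_limsup_lt hc1
    (isBoundedUnder_of ⟨1, fun t => aux_biSup_le _ _ _ zero_le_one (fun a _ => hin1 t a)⟩)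
  obtain ⟨t', ht'⟩ := hev.exists
  have hc0 : 0 ≤ c := (aux_biSup_nonneg _ _ (hin0 t')).trans ht'.le
  have hle : (⨆ a ∈ A', ρ a * PL a x) ≤ max c (γ / 2) := by
    refine aux_biSup_le _ _ _ (le_max_of_le_left hc0) (fun a _ => ?_)
    by_cases ha : γ / 2 ≤ ρ a
    · refine le_max_of_le_left ?_
      have hPc : PL a x ≤ c := by
        refine le_of_tendsto (hPL a x) (hev.mono fun t ht => ?_)
        have h1 := aux_le_biSup K₂ᶜ (transDen Px a t) 1 zero_le_one
          (fun y _ => aux_T_le hyp a t y) x hxK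
        have h2 := aux_le_biSup {x | γ / 2 ≤ ρ x} (fun a => ⨆ y ∈ K₂ᶜ, transDen Px a t y)
          1 zero_le_one (fun a _ => hin1 t a) a ha
        exact (h1.trans h2).trans ht.le
      exact (mul_le_of_le_one_left (hPL0 a x) (hρ.1 a).2).trans hPc
    · push Not at ha
      refine le_max_of_le_right ?_
      exact (mul_le_of_le_one_right (hρ.1 a).1 (hPL1 a x)).trans ha.le
  have hx' : γ ≤ ⨆ a ∈ A', ρ a * PL a x := hx
  have : max c (γ / 2) < γ := max_lt (by linarith) (by linarith)
  linarith
end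
end

section
/- Any LD limit point ρ of the invariant measures P^n is invariant for the limit transition kernel and continuous: ρ(x) = sup_{y∈S} ρ(y) · Π(y,x) for every x ∈ S, and the function x ↦ ρ(x) is continuous on S. -/
open Filter Topology Metric Set MeasureTheory
open scoped NNReal

noncomputable section

variable {S : Type*} [MetricSpace S]

/-- LD convergence at the given rate of a sequence of Borel probability measures to a
deviability density. -/
def LDConv {E : Type*} [TopologicalSpace E] [MeasurableSpace E]
    (Q : ℕ → Measure E) (rate : ℕ → ℕ) (p : E → ℝ) : Prop :=
  ∀ f : E → ℝ, Continuous f → (∀ x, 0 ≤ f x) → BddAbove (Set.range f) →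
    Tendsto (fun n => (∫ x, (f x) ^ (rate n) ∂(Q n)) ^ ((rate n : ℝ)⁻¹)) atTop
      (𝓝 (⨆ x, f x * p x))

variable [MeasurableSpace S] [BorelSpace S]

/-- The max flux `Φ_ρ(Γ,Γ')` relative to the limiting transition density `PL`. -/
def maxFlux (PL : S → S → ℝ) (ρ : S → ℝ) (Γ Γ' : Set S) : ℝ :=
  ⨆ x ∈ Γ, ρ x * ⨆ y ∈ Γ', PL x y

/-- `Φ_ρ(Γ, x)`, the max flux into a point. -/
def maxFluxPt (PL : S → S → ℝ) (ρ : S → ℝ) (Γ : Set S) (x : S) : ℝ :=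
  ⨆ a ∈ Γ, ρ a * PL a x

set_option linter.unusedSectionVars false
set_option linter.unusedVariables false

lemma ld_up (Q : ℕ → Measure S) (hQ : ∀ n, IsProbabilityMeasure (Q n)) (rate : ℕ → ℕ)
    (hr : Tendsto rate atTop atTop) (p : S → ℝ) (h : LDConv Q rate p) (f : C(S, ℝ))
    (hf : ∀ x, f x ∈ Icc (0:ℝ) 1) (b : ℝ) (hb : ⨆ x, f x * p x < b) :
    ∀ᶠ n in atTop, ∫⁻ x, ENNReal.ofReal (f x ^ rate n) ∂(Q n) ≤ ENNReal.ofReal (b ^ rate n) := by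
  have h1 := h f f.continuous (fun x => (hf x).1)
    ⟨1, by rintro _ ⟨x, rfl⟩; exact (hf x).2⟩
  filter_upwards [h1.eventually (gt_mem_nhds hb), hr.eventually (eventually_gt_atTop 0)]
    with n hn hpos
  have hi : Integrable (fun x => f x ^ rate n) (Q n) := by
    refine Integrable.of_bound (C := 1)
      ((f.continuous.pow _).measurable.aestronglyMeasurable) (ae_of_all _ fun x => ?_)
    rw [Real.norm_of_nonneg (pow_nonneg (hf x).1 _)]
    exact pow_le_one₀ (hf x).1 (hf x).2
  have h0 : 0 ≤ ∫ x, f x ^ rate n ∂(Q n) := integral_nonneg fun x => pow_nonneg (hf x).1 _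
  rw [← ofReal_integral_eq_lintegral_ofReal hi (ae_of_all _ fun x => pow_nonneg (hf x).1 _)]
  apply ENNReal.ofReal_le_ofReal
  rw [← Real.rpow_inv_natCast_pow h0 hpos.ne']
  exact pow_le_pow_left₀ (Real.rpow_nonneg h0 _) hn.le _

lemma ld_low (Q : ℕ → Measure S) (hQ : ∀ n, IsProbabilityMeasure (Q n)) (rate : ℕ → ℕ)
    (hr : Tendsto rate atTop atTop) (p : S → ℝ) (h : LDConv Q rate p) (f : C(S, ℝ))
    (hf : ∀ x, f x ∈ Icc (0:ℝ) 1) (b : ℝ) (hb0 : 0 ≤ b) (hb : b < ⨆ x, f x * p x) :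
    ∀ᶠ n in atTop, ENNReal.ofReal (b ^ rate n) ≤ ∫⁻ x, ENNReal.ofReal (f x ^ rate n) ∂(Q n) := by
  have h1 := h f f.continuous (fun x => (hf x).1)
    ⟨1, by rintro _ ⟨x, rfl⟩; exact (hf x).2⟩
  filter_upwards [h1.eventually (lt_mem_nhds hb), hr.eventually (eventually_gt_atTop 0)]
    with n hn hpos
  have hi : Integrable (fun x => f x ^ rate n) (Q n) := by
    refine Integrable.of_bound (C := 1)
      ((f.continuous.pow _).measurable.aestronglyMeasurable) (ae_of_all _ fun x => ?_)
    rw [Real.norm_of_nonneg (pow_nonneg (hf x).1 _)]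
    exact pow_le_one₀ (hf x).1 (hf x).2
  have h0 : 0 ≤ ∫ x, f x ^ rate n ∂(Q n) := integral_nonneg fun x => pow_nonneg (hf x).1 _
  rw [← ofReal_integral_eq_lintegral_ofReal hi (ae_of_all _ fun x => pow_nonneg (hf x).1 _)]
  apply ENNReal.ofReal_le_ofReal
  rw [← Real.rpow_inv_natCast_pow h0 hpos.ne']
  exact pow_le_pow_left₀ hb0 hn.le _

/-- A cut-off function: one on `F`, zero off `V`. -/
lemma cutoff (F V : Set S) (hF : IsClosed F) (hV : IsOpen V) (hFV : F ⊆ V) :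
    ∃ f : C(S, ℝ), (∀ x ∈ F, f x = 1) ∧ (∀ x ∉ V, f x = 0) ∧ ∀ x, f x ∈ Icc (0:ℝ) 1 := by
  obtain ⟨f, h0, h1, h2⟩ := exists_continuous_zero_one_of_isClosed hV.isClosed_compl hF
    (disjoint_left.2 fun x hx hx' => hx (hFV hx'))
  exact ⟨f, fun x hx => h1 hx, fun x hx => h0 hx, h2⟩

lemma cutoff_sup_le [Nonempty S] (p : S → ℝ) (hp : ∀ x, 0 ≤ p x) (V : Set S) (b : ℝ) (hb : 0 ≤ b)
    (hV : ∀ x ∈ V, p x ≤ b) (f : C(S, ℝ)) (hf0 : ∀ x ∉ V, f x = 0)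
    (hf : ∀ x, f x ∈ Icc (0:ℝ) 1) : ⨆ x, f x * p x ≤ b := by
  refine ciSup_le fun x => ?_
  by_cases hx : x ∈ V
  · have := hV x hx
    nlinarith [hp x, (hf x).1, (hf x).2]
  · rw [hf0 x hx]; simpa using hb

lemma le_cutoff_sup (p : S → ℝ) (hp : ∀ x, p x ∈ Icc (0:ℝ) 1) (f : C(S, ℝ))
    (hf : ∀ x, f x ∈ Icc (0:ℝ) 1) (x : S) : f x * p x ≤ ⨆ x, f x * p x := by
  refine le_ciSup (f := fun x => f x * p x) ⟨1, ?_⟩ x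
  rintro _ ⟨y, rfl⟩
  exact mul_le_one₀ (hf y).2 (hp y).1 (hp y).2

lemma P_upper [Nonempty S] (Q : ℕ → Measure S) (hQ : ∀ n, IsProbabilityMeasure (Q n)) (rate : ℕ → ℕ)
    (hr : Tendsto rate atTop atTop) (p : S → ℝ) (hp : ∀ x, p x ∈ Icc (0:ℝ) 1)
    (h : LDConv Q rate p) (F V : Set S) (hF : IsClosed F) (hV : IsOpen V) (hFV : F ⊆ V)
    (b b' : ℝ) (hb' : 0 ≤ b') (hpV : ∀ x ∈ V, p x ≤ b') (hb : b' < b) :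
    ∀ᶠ n in atTop, Q n F ≤ ENNReal.ofReal (b ^ rate n) := by
  obtain ⟨f, h1, h0, hf⟩ := cutoff F V hF hV hFV
  have hs := cutoff_sup_le p (fun x => (hp x).1) V b' hb' hpV f h0 hf
  filter_upwards [ld_up Q hQ rate hr p h f hf b (hs.trans_lt hb)] with n hn
  refine le_trans ?_ hn
  rw [← lintegral_indicator_one hF.measurableSet]
  refine lintegral_mono fun x => ?_
  by_cases hx : x ∈ F
  · simp [hx, h1 x hx]
  · simp [hx]

lemma P_lower (Q : ℕ → Measure S) (hQ : ∀ n, IsProbabilityMeasure (Q n)) (rate : ℕ → ℕ)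
    (hr : Tendsto rate atTop atTop) (p : S → ℝ) (hp : ∀ x, p x ∈ Icc (0:ℝ) 1)
    (h : LDConv Q rate p) (V : Set S) (hV : IsOpen V) (y : S) (hy : y ∈ V)
    (b : ℝ) (hb0 : 0 ≤ b) (hb : b < p y) :
    ∀ᶠ n in atTop, ENNReal.ofReal (b ^ rate n) ≤ Q n V := by
  obtain ⟨f, h1, h0, hf⟩ := cutoff {y} V isClosed_singleton hV (by simpa using hy)
  have hs := le_cutoff_sup p hp f hf y
  rw [h1 y rfl, one_mul] at hs
  filter_upwards [ld_low Q hQ rate hr p h f hf b hb0 (hb.trans_le hs),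
    hr.eventually (eventually_gt_atTop 0)] with n hn hpos
  refine hn.trans ?_
  rw [← lintegral_indicator_one hV.measurableSet]
  refine lintegral_mono fun x => ?_
  by_cases hx : x ∈ V
  · simpa [hx] using pow_le_one₀ (hf x).1 (hf x).2
  · simp [hx, h0 x hx, hpos.ne']

lemma unif_of_seq (R : ℕ → S → Prop) (z : S)
    (h : ∀ xs : ℕ → S, Tendsto xs atTop (𝓝 z) → ∀ᶠ n in atTop, R n (xs n)) :
    ∃ U : Set S, IsOpen U ∧ z ∈ U ∧ ∀ᶠ n in atTop, ∀ z' ∈ U, R n z' := by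
  have key : ∀ᶠ q in (atTop : Filter ℕ) ×ˢ 𝓝 z, R q.1 q.2 := by
    by_contra hc
    obtain ⟨ns, hns, hbad⟩ := exists_seq_forall_of_frequently (not_eventually.1 hc)
    have t1 : Tendsto (fun k => (ns k).1) atTop atTop := tendsto_fst.comp hns
    have t2 : Tendsto (fun k => (ns k).2) atTop (𝓝 z) := tendsto_snd.comp hns
    obtain ⟨ψ, hψ, hm⟩ := strictMono_subseq_of_tendsto_atTop t1
    set u : ℕ → ℕ := (fun k => (ns k).1) ∘ ψ with hu
    have t3 : Tendsto (fun k => (ns (ψ k)).2) atTop (𝓝 z) := t2.comp hψ.tendsto_atTop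
    let xs : ℕ → S := Function.extend u (fun k => (ns (ψ k)).2) (fun _ => z)
    have hxs : Tendsto xs atTop (𝓝 z) := by
      rw [tendsto_def]
      intro V hV
      obtain ⟨K, hK⟩ := eventually_atTop.1 (t3.eventually hV)
      refine mem_atTop_sets.2 ⟨u K, fun n hn => ?_⟩
      by_cases hex : ∃ k, u k = n
      · obtain ⟨k, rfl⟩ := hex
        have : xs (u k) = (ns (ψ k)).2 := hm.injective.extend_apply _ _ _
        rw [mem_preimage, this]
        exact hK k (hm.le_iff_le.1 hn)
      · have : xs n = z := Function.extend_apply' _ _ _ hex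
        rw [mem_preimage, this]
        exact mem_of_mem_nhds hV
    have := hm.tendsto_atTop.eventually (h xs hxs)
    obtain ⟨k, hk⟩ := this.exists
    have e : xs (u k) = (ns (ψ k)).2 := hm.injective.extend_apply _ _ _
    rw [e] at hk
    exact hbad _ hk
  obtain ⟨pa, hpa, pb, hpb, hab⟩ := eventually_prod_iff.1 key
  obtain ⟨U, hU, hUo, hz⟩ := _root_.mem_nhds_iff.1 hpb
  exact ⟨U, hUo, hz, hpa.mono fun n hn z' hz' => hab hn (hU hz')⟩

lemma Px_le_one {Px : S → C(ℝ≥0, S) → ℝ} {A : Set S} (hyp : DevSetup S Px A) (x X) :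
    Px x X ∈ Icc (0:ℝ) 1 := (hyp.dev x).1 X

lemma le_bsup_s8 {Px : S → C(ℝ≥0, S) → ℝ} {A : Set S} (hyp : DevSetup S Px A) (x : S)
    (B : Set C(ℝ≥0, S)) (X) (hX : X ∈ B) : Px x X ≤ ⨆ X ∈ B, Px x X := by
  have hb : BddAbove (range fun X => ⨆ _ : X ∈ B, Px x X) := by
    refine ⟨1, ?_⟩
    rintro _ ⟨Y, rfl⟩
    exact Real.iSup_le (fun _ => (Px_le_one hyp x Y).2) zero_le_one
  refine le_trans ?_ (le_ciSup hb X)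
  simp [hX]

lemma bsup_le_s8 {Px : S → C(ℝ≥0, S) → ℝ} (x : S)
    (B : Set C(ℝ≥0, S)) (c : ℝ) (hc : 0 ≤ c) (h : ∀ X ∈ B, Px x X ≤ c) : ⨆ X ∈ B, Px x X ≤ c :=
  Real.iSup_le (fun X => Real.iSup_le (fun hX => h X hX) hc) hc

lemma transDen_mem {Px : S → C(ℝ≥0, S) → ℝ} {A : Set S} (hyp : DevSetup S Px A) (x t y) :
    transDen Px x t y ∈ Icc (0:ℝ) 1 :=
  ⟨Real.iSup_nonneg fun X => Real.iSup_nonneg fun _ => (Px_le_one hyp x X).1,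
    bsup_le_s8 x _ 1 zero_le_one fun X _ => (Px_le_one hyp x X).2⟩

/-- Concatenation of paths. -/
def concat (s : ℝ≥0) (X Y : C(ℝ≥0, S)) (h : X s = Y 0) : C(ℝ≥0, S) :=
  ⟨fun u => if u ≤ s then X u else Y (u - s), by
    refine Continuous.if_le X.continuous (Y.continuous.comp (continuous_id.sub continuous_const))
      continuous_id continuous_const ?_
    rintro u rfl
    simpa using h⟩

lemma ck {Px : S → C(ℝ≥0, S) → ℝ} {A : Set S} (hyp : DevSetup S Px A) (x y z : S) (s t : ℝ≥0) :
    transDen Px x s y * transDen Px y t z ≤ transDen Px x (s + t) z := by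
  have h0 : 0 ≤ transDen Px x (s + t) z := (transDen_mem hyp _ _ _).1
  have key : ∀ X : C(ℝ≥0, S), X s = y → ∀ Y : C(ℝ≥0, S), Y t = z →
      Px x X * Px y Y ≤ transDen Px x (s + t) z := by
    intro X hX Y hY
    by_cases hY0 : Y 0 = y
    · let Z := concat s X Y (hX.trans hY0.symm)
      have hZ1 : ∀ u ≤ s, Z u = X u := fun u hu => by simp [Z, concat, hu]
      have hZ2 : pshift s Z = Y := by
        ext u
        by_cases hu : u = 0
        · subst hu; simp [Z, concat, pshift, hX, hY0]
        · have : ¬ (s + u ≤ s) := by simpa using hu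
          simp [Z, concat, pshift, hu]
      have hZt : Z (s + t) = z := by
        rw [← hY, ← hZ2]; rfl
      refine le_trans ?_ (le_bsup_s8 hyp x {X | X (s + t) = z} Z hZt)
      rw [hyp.markov x Z s, hZ2, hZ1 s le_rfl, hX]
      refine mul_le_mul_of_nonneg_right ?_ (Px_le_one hyp _ _).1
      exact le_bsup_s8 hyp x {X' | ∀ u ≤ s, X' u = Z u} X fun u hu => (hZ1 u hu).symm
    · rw [hyp.start y Y hY0, mul_zero]; exact h0
  have k2 : ∀ X : C(ℝ≥0, S), X s = y →
      Px x X * transDen Px y t z ≤ transDen Px x (s + t) z := by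
    intro X hX
    rcases (Px_le_one hyp x X).1.eq_or_lt with h | h
    · rw [← h, zero_mul]; exact h0
    · rw [mul_comm, ← le_div_iff₀ h]
      refine bsup_le_s8 y _ _ (by positivity) fun Y hY => ?_
      rw [le_div_iff₀ h, mul_comm]
      exact key X hX Y hY
  rcases (transDen_mem hyp y t z).1.eq_or_lt with h | h
  · rw [← h, mul_zero]; exact h0
  · rw [← le_div_iff₀ h]
    refine bsup_le_s8 x _ _ (by positivity) fun X hX => ?_
    rw [le_div_iff₀ h]
    exact k2 X hX

lemma rho_usc {ρ : S → ℝ} (h : IsDeviabilityDensity ρ) (b : ℝ) (hb : 0 < b) :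
    IsOpen {x | ρ x < b} := by
  rcases le_or_gt b 1 with hb1 | hb1
  · have := (h.2.2 b ⟨hb, hb1⟩).isClosed.isOpen_compl
    convert this using 1
    ext x; simp
  · convert isOpen_univ using 1
    ext x; simpa using (h.1 x).2.trans_lt hb1

lemma choose_low (b u v : ℝ) (hb : 0 ≤ b) (hu : 0 ≤ u) (hv : 0 ≤ v) (h : b < u * v) :
    ∃ r s : ℝ, 0 ≤ r ∧ r < u ∧ 0 ≤ s ∧ s < v ∧ b < r * s := by
  have hu' : 0 < u := hu.lt_of_ne (by rintro rfl; simp at h; linarith)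
  obtain ⟨s, hs1, hs2⟩ := exists_between (show b / u < v by rw [div_lt_iff₀ hu']; linarith)
  have hs0 : 0 < s := lt_of_le_of_lt (by positivity) hs1
  obtain ⟨r, hr1, hr2⟩ := exists_between
    (show b / s < u by rw [div_lt_iff₀ hs0]; rw [div_lt_iff₀ hu'] at hs1; linarith)
  exact ⟨r, s, le_trans (by positivity) hr1.le, hr2, hs0.le, hs2, by rwa [div_lt_iff₀ hs0] at hr1⟩

lemma choose_up (c u v : ℝ) (hu : 0 ≤ u) (hv : 0 ≤ v) (h : u * v < c) :
    ∃ r s : ℝ, u < r ∧ v < s ∧ r * s < c := by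
  have hc : 0 < c := lt_of_le_of_lt (by positivity) h
  have : ∃ s, v < s ∧ u * s < c := by
    rcases hu.eq_or_lt with h0 | h0
    · exact ⟨v + 1, by linarith, by rw [← h0]; simpa using hc⟩
    · obtain ⟨s, hs1, hs2⟩ := exists_between (show v < c / u by rw [lt_div_iff₀ h0]; linarith)
      exact ⟨s, hs1, by rw [lt_div_iff₀ h0] at hs2; linarith⟩
  obtain ⟨s, hs1, hs2⟩ := this
  have hs0 : 0 < s := hv.trans_lt hs1
  obtain ⟨r, hr1, hr2⟩ := exists_between (show u < c / s by rwa [lt_div_iff₀ hs0])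
  exact ⟨r, s, hr1, hs1, by rwa [lt_div_iff₀ hs0] at hr2⟩

lemma comp_inv (κ : ProbabilityTheory.Kernel S S) (P : Measure S)
    (hinv : ∀ Γ : Set S, MeasurableSet Γ → P Γ = ∫⁻ x, κ x Γ ∂P) (f : S → ENNReal)
    (hf : Measurable f) : ∫⁻ y, f y ∂P = ∫⁻ x, ∫⁻ y, f y ∂(κ x) ∂P := by
  have h : P = P.bind κ := by
    ext s hs
    rw [Measure.bind_apply hs κ.aemeasurable]
    exact hinv s hs
  conv_lhs => rw [h]
  exact Measure.lintegral_bind κ.aemeasurable hf.aemeasurable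

lemma ineqA (Px : S → C(ℝ≥0, S) → ℝ) (A : Set S) (hyp : DevSetup S Px A)
    (κ : ℕ → ℝ≥0 → ProbabilityTheory.Kernel S S)
    (hκ : ∀ n t, ProbabilityTheory.IsMarkovKernel (κ n t))
    (P : ℕ → Measure S) (hP : ∀ n, IsProbabilityMeasure (P n))
    (hinv : ∀ n (t : ℝ≥0) (Γ : Set S), MeasurableSet Γ →
      P n Γ = ∫⁻ x, κ n t x Γ ∂(P n))
    (hκLD : ∀ (t : ℝ≥0) (x : S) (xs : ℕ → S), Tendsto xs atTop (𝓝 x) →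
      LDConv (fun n => κ n t (xs n)) (fun n => n) (fun y => transDen Px x t y))
    (ρ : S → ℝ) (hρdev : IsDeviabilityDensity ρ)
    (φ : ℕ → ℕ) (hφ : StrictMono φ)
    (hρ : LDConv (fun k => P (φ k)) φ ρ) (t : ℝ≥0) (x y : S) :
    ρ y * transDen Px y t x ≤ ρ x := by
  by_contra! hlt
  have : Nonempty S := ⟨x⟩
  obtain ⟨b, hb1, hb2⟩ := exists_between hlt
  obtain ⟨b', hb1', hb2'⟩ := exists_between hb1
  have hx0 := (hρdev.1 x).1
  have hb'0 : 0 < b' := hx0.trans_lt hb1'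
  have hb0 : 0 < b := hb'0.trans hb2'
  obtain ⟨f, h1, h0, hf⟩ := cutoff {x} {z | ρ z < b'} isClosed_singleton
    (rho_usc hρdev b' hb'0) (by simpa using hb1')
  have hs := cutoff_sup_le ρ (fun x => (hρdev.1 x).1) {z | ρ z < b'} b' hb'0.le
    (fun z hz => le_of_lt hz) f h0 hf
  have e1 := ld_up _ (fun k => hP (φ k)) φ hφ.tendsto_atTop ρ hρ f hf b (hs.trans_lt hb2')
  obtain ⟨r, s, hr0, hr, hs0, hs, hrs⟩ := choose_low b _ _ hb0.le (hρdev.1 y).1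
    (transDen_mem hyp y t x).1 hb2
  have hg : s < ⨆ z, f z * transDen Px y t z := by
    refine hs.trans_le ?_
    have := le_cutoff_sup (fun z => transDen Px y t z) (transDen_mem hyp y t) f hf x
    rwa [h1 x rfl, one_mul] at this
  obtain ⟨U, hUo, hyU, hU⟩ := unif_of_seq
    (fun n z' => ENNReal.ofReal (s ^ n) ≤ ∫⁻ w, ENNReal.ofReal (f w ^ n) ∂(κ n t z')) y
    (fun xs hxs => ld_low (fun n => κ n t (xs n)) (fun n => (hκ n t).isProbabilityMeasure _)
      (fun n => n) tendsto_id _ (hκLD t y xs hxs) f hf s hs0 hg)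
  have e2 := P_lower _ (fun k => hP (φ k)) φ hφ.tendsto_atTop ρ hρdev.1 hρ U hUo y hyU r hr0 hr
  have e3 := hφ.tendsto_atTop.eventually hU
  have e4 := hφ.tendsto_atTop.eventually (eventually_gt_atTop 0)
  obtain ⟨k, k1, k2, k3, k4⟩ := (e1.and (e2.and (e3.and e4))).exists
  rw [comp_inv (κ (φ k) t) (P (φ k)) (hinv _ _)
    (fun y => ENNReal.ofReal (f y ^ φ k)) (f.continuous.pow _).measurable.ennreal_ofReal] at k1
  have : ENNReal.ofReal (s ^ φ k) * ENNReal.ofReal (r ^ φ k) ≤ ENNReal.ofReal (b ^ φ k) := by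
    refine le_trans (mul_le_mul_right k2 _) (le_trans ?_ k1)
    rw [← setLIntegral_const]
    refine le_trans (setLIntegral_mono' hUo.measurableSet k3) (setLIntegral_le_lintegral _ _)
  rw [← ENNReal.ofReal_mul (by positivity), ENNReal.ofReal_le_ofReal_iff (by positivity),
    ← mul_pow] at this
  exact absurd this (not_le.2 (pow_lt_pow_left₀ (by linarith) hb0.le k4.ne'))

lemma ineqB (Px : S → C(ℝ≥0, S) → ℝ) (A : Set S) (hyp : DevSetup S Px A)
    (κ : ℕ → ℝ≥0 → ProbabilityTheory.Kernel S S)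
    (hκ : ∀ n t, ProbabilityTheory.IsMarkovKernel (κ n t))
    (P : ℕ → Measure S) (hP : ∀ n, IsProbabilityMeasure (P n))
    (hinv : ∀ n (t : ℝ≥0) (Γ : Set S), MeasurableSet Γ →
      P n Γ = ∫⁻ x, κ n t x Γ ∂(P n))
    (hκLD : ∀ (t : ℝ≥0) (x : S) (xs : ℕ → S), Tendsto xs atTop (𝓝 x) →
      LDConv (fun n => κ n t (xs n)) (fun n => n) (fun y => transDen Px x t y))
    (ρ : S → ℝ) (hρdev : IsDeviabilityDensity ρ)
    (φ : ℕ → ℕ) (hφ : StrictMono φ)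
    (hρ : LDConv (fun k => P (φ k)) φ ρ) (t : ℝ≥0) (x : S) (V : Set S) (hV : IsOpen V)
    (hxV : x ∈ V) (c : ℝ) (hc : 0 < c) (hle : ∀ z, ∀ y ∈ V, ρ z * transDen Px z t y ≤ c) :
    ρ x ≤ c := by
  by_contra! hlt
  have : Nonempty S := ⟨x⟩
  obtain ⟨b, hb1, hb2⟩ := exists_between hlt
  obtain ⟨c', hc1, hc2⟩ := exists_between hb1
  have hc'0 : 0 < c' := hc.trans hc1
  have hcle : c ≤ 1 := hlt.le.trans (hρdev.1 x).2
  obtain ⟨f, h1, h0, hf⟩ := cutoff {x} V isClosed_singleton hV (by simpa using hxV)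
  have hsx := le_cutoff_sup ρ hρdev.1 f hf x
  rw [h1 x rfl, one_mul] at hsx
  have elow := ld_low _ (fun k => hP (φ k)) φ hφ.tendsto_atTop ρ hρ f hf b (by linarith)
    (hb2.trans_le hsx)
  let G : ℕ → S → ENNReal := fun k z => ∫⁻ w, ENNReal.ofReal (f w ^ φ k) ∂(κ (φ k) t z)
  have hG1 : ∀ k z, G k z ≤ 1 := by
    intro k z
    have := (hκ (φ k) t).isProbabilityMeasure z
    calc G k z ≤ ∫⁻ w, 1 ∂(κ (φ k) t z) := lintegral_mono fun w => by
          simpa using pow_le_one₀ (hf w).1 (hf w).2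
      _ = 1 := by simp
  have loc : ∀ z, ∃ U : Set S, IsOpen U ∧ z ∈ U ∧
      ∀ᶠ k in atTop, ∫⁻ w in U, G k w ∂(P (φ k)) ≤ ENNReal.ofReal (c' ^ φ k) := by
    intro z
    set g := ⨆ y, f y * transDen Px z t y with hg
    have hg0 : 0 ≤ g := Real.iSup_nonneg fun y => mul_nonneg (hf y).1 (transDen_mem hyp z t y).1
    have hgr : g * ρ z ≤ c := by
      rcases (hρdev.1 z).1.eq_or_lt with h | h
      · rw [← h, mul_zero]; exact hc.le
      · rw [← le_div_iff₀ h]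
        refine ciSup_le fun y => ?_
        rw [le_div_iff₀ h]
        by_cases hy : y ∈ V
        · have := hle z y hy
          have h3 : 0 ≤ ρ z * transDen Px z t y := mul_nonneg h.le (transDen_mem hyp z t y).1
          nlinarith [(hf y).1, (hf y).2]
        · rw [h0 y hy]; simpa using hc.le
    obtain ⟨α, β, hα, hβ, hαβ⟩ := choose_up c' g (ρ z) hg0 (hρdev.1 z).1 (hgr.trans_lt hc1)
    obtain ⟨β', hβ1, hβ2⟩ := exists_between hβ
    have hβ'0 : 0 < β' := (hρdev.1 z).1.trans_lt hβ1
    obtain ⟨U, hUo, hzU, hU⟩ := unif_of_seq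
      (fun n z' => ∫⁻ w, ENNReal.ofReal (f w ^ n) ∂(κ n t z') ≤ ENNReal.ofReal (α ^ n)) z
      (fun xs hxs => ld_up (fun n => κ n t (xs n)) (fun n => (hκ n t).isProbabilityMeasure _)
        (fun n => n) tendsto_id _ (hκLD t z xs hxs) f hf α hα)
    have hW := rho_usc hρdev β' hβ'0
    obtain ⟨r, hr, hrW⟩ := nhds_basis_closedBall.mem_iff.1 (hW.mem_nhds hβ1)
    have e2 := P_upper _ (fun k => hP (φ k)) φ hφ.tendsto_atTop ρ hρdev.1 hρ (closedBall z r)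
      _ isClosed_closedBall hW hrW β β' hβ'0.le (fun w hw => le_of_lt hw) hβ2
    refine ⟨U ∩ ball z r, hUo.inter isOpen_ball, ⟨hzU, mem_ball_self hr⟩, ?_⟩
    filter_upwards [e2, hφ.tendsto_atTop.eventually hU] with k k2 k3
    have hm : MeasurableSet (U ∩ ball z r) := (hUo.inter isOpen_ball).measurableSet
    calc ∫⁻ w in U ∩ ball z r, G k w ∂(P (φ k))
        ≤ ∫⁻ w in U ∩ ball z r, ENNReal.ofReal (α ^ φ k) ∂(P (φ k)) :=
          setLIntegral_mono' hm fun w hw => k3 w hw.1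
      _ = ENNReal.ofReal (α ^ φ k) * P (φ k) (U ∩ ball z r) := setLIntegral_const _ _
      _ ≤ ENNReal.ofReal (α ^ φ k) * ENNReal.ofReal (β ^ φ k) := by
          gcongr
          exact (measure_mono (inter_subset_right.trans ball_subset_closedBall)).trans k2
      _ = ENNReal.ofReal ((α * β) ^ φ k) := by
          rw [← ENNReal.ofReal_mul (pow_nonneg (hg0.trans hα.le) _), mul_pow]
      _ ≤ ENNReal.ofReal (c' ^ φ k) := by
          apply ENNReal.ofReal_le_ofReal
          exact pow_le_pow_left₀ (mul_nonneg (hg0.trans hα.le) (hβ'0.le.trans hβ2.le)) hαβ.le _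
  choose U hUo hzU hU using loc
  obtain ⟨T, -, hT⟩ := (hρdev.2.2 c ⟨hc, hcle⟩).elim_nhds_subcover U
    (fun z _ => (hUo z).mem_nhds (hzU z))
  set W := ⋃ z ∈ T, U z with hWdef
  have hWo : IsOpen W := isOpen_biUnion fun z _ => hUo z
  have hsub : Wᶜ ⊆ {z | ρ z < c} := by
    intro z hz
    by_contra h
    have h' : c ≤ ρ z := not_lt.1 h
    exact hz (hT h')
  have e3 := P_upper _ (fun k => hP (φ k)) φ hφ.tendsto_atTop ρ hρdev.1 hρ Wᶜ
      _ hWo.isClosed_compl (rho_usc hρdev c hc) hsub c' c hc.le (fun w hw => le_of_lt hw) hc1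
  have e4 : ∀ᶠ k in atTop, ∀ z ∈ T,
      ∫⁻ w in U z, G k w ∂(P (φ k)) ≤ ENNReal.ofReal (c' ^ φ k) :=
    (Finset.eventually_all T).2 fun z _ => hU z
  have e5 : ∀ᶠ k in atTop, (T.card + 1 : ℝ) < (b / c') ^ φ k :=
    ((tendsto_pow_atTop_atTop_of_one_lt ((one_lt_div hc'0).2 hc2)).comp
      hφ.tendsto_atTop).eventually (eventually_gt_atTop _)
  obtain ⟨k, k1, k3, k4, k5⟩ := (elow.and (e3.and (e4.and e5))).exists
  have hbiU : ∀ T' : Finset S, ∫⁻ w in ⋃ z ∈ T', U z, G k w ∂(P (φ k)) ≤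
      ∑ z ∈ T', ∫⁻ w in U z, G k w ∂(P (φ k)) := by
    classical
    intro T'
    induction T' using Finset.induction_on with
    | empty => simp
    | insert a s ha ih =>
      rw [Finset.set_biUnion_insert, Finset.sum_insert ha]
      exact (lintegral_union_le _ _ _).trans (add_le_add le_rfl ih)
  rw [comp_inv (κ (φ k) t) (P (φ k)) (hinv _ _)
    (fun y => ENNReal.ofReal (f y ^ φ k)) (f.continuous.pow _).measurable.ennreal_ofReal] at k1
  have hfin : ENNReal.ofReal (b ^ φ k) ≤ ENNReal.ofReal ((T.card + 1) * c' ^ φ k) := by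
    calc ENNReal.ofReal (b ^ φ k) ≤ ∫⁻ w, G k w ∂(P (φ k)) := k1
      _ = ∫⁻ w in W, G k w ∂(P (φ k)) + ∫⁻ w in Wᶜ, G k w ∂(P (φ k)) :=
          (lintegral_add_compl _ hWo.measurableSet).symm
      _ ≤ (∑ z ∈ T, ENNReal.ofReal (c' ^ φ k)) + ENNReal.ofReal (c' ^ φ k) := by
          refine add_le_add ((hbiU T).trans (Finset.sum_le_sum k4)) (le_trans ?_ k3)
          calc ∫⁻ w in Wᶜ, G k w ∂(P (φ k)) ≤ ∫⁻ w in Wᶜ, 1 ∂(P (φ k)) :=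
                lintegral_mono fun w => hG1 k w
            _ = P (φ k) Wᶜ := by simp
      _ = ENNReal.ofReal ((T.card + 1) * c' ^ φ k) := by
          rw [ENNReal.ofReal_mul (by positivity), ENNReal.ofReal_add (by positivity) zero_le_one]
          simp [add_mul]
  rw [ENNReal.ofReal_le_ofReal_iff (by positivity)] at hfin
  rw [div_pow, lt_div_iff₀ (by positivity)] at k5
  linarith

theorem stmt8 (Px : S → C(ℝ≥0, S) → ℝ) (A : Set S) (hyp : DevSetup S Px A)
    (PL : S → S → ℝ)
    (hPL : ∀ x y : S, Tendsto (fun t : ℝ≥0 => transDen Px x t y) atTop (𝓝 (PL x y)))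
    (κ : ℕ → ℝ≥0 → ProbabilityTheory.Kernel S S)
    (hκ : ∀ n t, ProbabilityTheory.IsMarkovKernel (κ n t))
    (P : ℕ → Measure S) (hP : ∀ n, IsProbabilityMeasure (P n))
    (hinv : ∀ n (t : ℝ≥0) (Γ : Set S), MeasurableSet Γ →
      P n Γ = ∫⁻ x, κ n t x Γ ∂(P n))
    (hκLD : ∀ (t : ℝ≥0) (x : S) (xs : ℕ → S), Tendsto xs atTop (𝓝 x) →
      LDConv (fun n => κ n t (xs n)) (fun n => n) (fun y => transDen Px x t y))
    (ρ : S → ℝ) (hρdev : IsDeviabilityDensity ρ)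
    (φ : ℕ → ℕ) (hφ : StrictMono φ)
    (hρ : LDConv (fun k => P (φ k)) φ ρ) :
    (∀ x : S, ρ x = ⨆ y : S, ρ y * PL y x) ∧ Continuous ρ := by
  have hA := ineqA Px A hyp κ hκ P hP hinv hκLD ρ hρdev φ hφ hρ
  have hB := ineqB Px A hyp κ hκ P hP hinv hκLD ρ hρdev φ hφ hρ
  have hρ0 : ∀ x, 0 ≤ ρ x := fun x => (hρdev.1 x).1
  have hcont : Continuous ρ := by
    rw [continuous_iff_continuousAt]
    intro x
    refine tendsto_order.2 ⟨fun a ha => ?_, fun a ha => ?_⟩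
    · have : Tendsto (fun ε : ℝ => ρ x * (1 - ε)) (𝓝[>] 0) (𝓝 (ρ x * (1 - 0))) :=
        ((continuous_const.mul (continuous_const.sub continuous_id)).tendsto 0).mono_left
          nhdsWithin_le_nhds
      rw [sub_zero, mul_one] at this
      obtain ⟨ε, h1, h2⟩ := ((this.eventually (lt_mem_nhds ha)).and self_mem_nhdsWithin).exists
      obtain ⟨δ, hδ, t₀, t₁, hm⟩ := hyp.localMove x ε h2
      filter_upwards [ball_mem_nhds x hδ] with x' hx'
      have hx2 := hm x' (by rw [dist_comm]; exact hx')
      have := hA t₀ x' x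
      nlinarith [hρ0 x, hx2.1]
    · exact (rho_usc hρdev a ((hρ0 x).trans_lt ha)).mem_nhds ha
  refine ⟨fun x => le_antisymm ?_ ?_, hcont⟩
  swap
  · have : Nonempty S := ⟨x⟩
    refine ciSup_le fun y => ?_
    exact le_of_tendsto' ((hPL y x).const_mul (ρ y)) fun t => hA t x y
  have hPL1 : ∀ y z, PL y z ≤ 1 := fun y z =>
    le_of_tendsto' (hPL y z) fun t => (transDen_mem hyp y t z).2
  have hPL0 : ∀ y z, 0 ≤ PL y z := fun y z =>
    ge_of_tendsto' (hPL y z) fun t => (transDen_mem hyp y t z).1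
  rcases (hρ0 x).eq_or_lt with hx0 | hx0
  · rw [← hx0]
    exact Real.iSup_nonneg fun y => mul_nonneg (hρ0 y) (hPL0 y x)
  have hbdd : BddAbove (range fun y => ρ y * PL y x) := by
    refine ⟨1, ?_⟩
    rintro _ ⟨y, rfl⟩
    exact mul_le_one₀ (hρdev.1 y).2 (hPL0 y x) (hPL1 y x)
  have main : ∀ ε ∈ Ioo (0:ℝ) 1, (1 - ε) ^ 3 * ρ x ≤ ⨆ y, ρ y * PL y x := by
    intro ε hε
    have h1ε : 0 < 1 - ε := by linarith [hε.2]
    obtain ⟨δ, hδ, _, t₁, hm⟩ := hyp.localMove x ε hε.1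
    have hc : 0 < (1 - ε) * ρ x := by positivity
    have hz : ∀ n : ℕ, ∃ z, (1 - ε) ^ 2 * ρ x ≤ ρ z * transDen Px z (n + t₁) x ∧
        (1 - ε) * ρ x ≤ ρ z := by
      intro n
      by_contra! hcon
      have := hB n x (ball x δ) isOpen_ball (mem_ball_self hδ) ((1 - ε) * ρ x) hc (by
        intro z y hy
        by_contra! hlt
        have hy2 := (hm y (by rw [dist_comm]; exact hy)).2
        have hck := ck hyp z y x n t₁
        have hz1 := transDen_mem hyp z n y
        have q1 : ρ z * transDen Px z n y ≤ ρ z := mul_le_of_le_one_right (hρ0 z) hz1.2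
        refine absurd (hcon z ?_) (not_lt.2 (hlt.le.trans q1))
        calc (1 - ε) ^ 2 * ρ x = ((1 - ε) * ρ x) * (1 - ε) := by ring
          _ ≤ (ρ z * transDen Px z n y) * transDen Px y t₁ x :=
            mul_le_mul hlt.le hy2.le h1ε.le (mul_nonneg (hρ0 z) hz1.1)
          _ = ρ z * (transDen Px z n y * transDen Px y t₁ x) := by ring
          _ ≤ _ := mul_le_mul_of_nonneg_left hck (hρ0 z))
      nlinarith [hε.1]
    choose zs hzs1 hzs2 using hz
    obtain ⟨z, -, ψ, hψ, hlim⟩ := (hρdev.2.2 ((1 - ε) * ρ x) ⟨hc, by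
      nlinarith [hε.1, (hρdev.1 x).2]⟩).tendsto_subseq hzs2
    obtain ⟨δ', hδ', t₀, _, hm'⟩ := hyp.localMove z ε hε.1
    have ev : ∀ᶠ n in atTop, (1 - ε) ^ 3 * ρ x ≤
        ρ (zs (ψ n)) * transDen Px z (t₀ + ((ψ n : ℝ≥0) + t₁)) x := by
      filter_upwards [hlim.eventually (ball_mem_nhds z hδ')] with n hn
      have q := (hm' (zs (ψ n)) (by rw [dist_comm]; exact hn)).1
      have hck := ck hyp z (zs (ψ n)) x t₀ ((ψ n : ℝ≥0) + t₁)
      have q2 := (transDen_mem hyp (zs (ψ n)) ((ψ n : ℝ≥0) + t₁) x).1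
      calc (1 - ε) ^ 3 * ρ x = (1 - ε) * ((1 - ε) ^ 2 * ρ x) := by ring
        _ ≤ transDen Px z t₀ (zs (ψ n)) *
            (ρ (zs (ψ n)) * transDen Px (zs (ψ n)) ((ψ n : ℝ≥0) + t₁) x) :=
          mul_le_mul q.le (hzs1 _) (by positivity) (h1ε.le.trans q.le)
        _ = ρ (zs (ψ n)) * (transDen Px z t₀ (zs (ψ n)) *
            transDen Px (zs (ψ n)) ((ψ n : ℝ≥0) + t₁) x) := by ring
        _ ≤ _ := mul_le_mul_of_nonneg_left hck (hρ0 _)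
    have ht : Tendsto (fun n => t₀ + ((ψ n : ℝ≥0) + t₁)) atTop atTop := by
      refine tendsto_atTop_mono (fun n => ?_)
        ((tendsto_natCast_atTop_atTop (R := ℝ≥0)).comp hψ.tendsto_atTop)
      exact le_trans (le_add_of_nonneg_right zero_le) (le_add_of_nonneg_left zero_le)
    have hl := ((hcont.tendsto z).comp hlim).mul ((hPL z x).comp ht)
    exact (ge_of_tendsto hl ev).trans (le_ciSup hbdd z)
  have : Tendsto (fun ε : ℝ => (1 - ε) ^ 3 * ρ x) (𝓝[>] 0) (𝓝 ((1 - 0) ^ 3 * ρ x)) :=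
    Tendsto.mono_left (Continuous.tendsto (by fun_prop) 0) nhdsWithin_le_nhds
  have hfin := le_of_tendsto this
    (eventually_of_mem (Ioo_mem_nhdsGT (zero_lt_one' ℝ)) main)
  simpa using hfin
end
end
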